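/- arXiv:2507.06716 — 2 statements merged into one kernel-verified Lean document; each statement's English description precedes it below -/
import Mathlib

section
/- Let σ ∈ (0,1) and σ < α ≤ (3+2σ)/4. For each integer k ≥ 2 define φ_k : ℕ → ℝ by φ_k(n) = 1 for n ≤ k, φ_k(n) = 2 − log n / log k for k < n ≤ k², and φ_k(n) = 0 for n > k², and set ψ_k(n) := φ_k(n)·I_α(n). Then each ψ_k is nonnegative and finitely supported, ψ_k(1) = I_α(1), and Q^σ(ψ_k) − Σ_{n≥1} W_{α,σ}(n)·ψ_k(n)² → 0 as k → ∞ (i.e., (ψ_k) is a null-sequence for (−Δ_ℕ)^σ − W_{α,σ}). -/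
open Real Filter

/-- Generalized binomial coefficient via the Gamma function. -/
noncomputable def rbinom (a b : ℝ) : ℝ :=
  Real.Gamma (a + 1) / (Real.Gamma (b + 1) * Real.Gamma (a - b + 1))

/-- Kernel of the fractional Laplacian `(-Δ_ℕ)^σ` on the discrete half-line. -/
noncomputable def Kker (σ : ℝ) (m n : ℕ) : ℝ :=
  (-1 : ℝ) ^ (m + n) *
    (rbinom (2 * σ) (σ + m - n) - rbinom (2 * σ) (σ + m + n))

/-- Quadratic form of `(-Δ_ℕ)^σ` (used for finitely supported `f` with `f 0 = 0`). -/
noncomputable def Qform (σ : ℝ) (f : ℕ → ℝ) : ℝ :=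
  ∑' m : ℕ, ∑' n : ℕ, Kker σ m n * f m * f n

/-- The Hardy-weight `W_{α,σ}`. -/
noncomputable def Wweight (σ α : ℝ) (n : ℕ) : ℝ :=
  4 ^ σ * (Real.Gamma (3/2 - α + σ) * Real.Gamma α /
            (Real.Gamma (α - σ) * Real.Gamma (3/2 - α))) *
    (Real.Gamma (n + α - σ - 1) * Real.Gamma (n - α + 2) /
      (Real.Gamma (n - α + σ + 2) * Real.Gamma (n + α - 1)))

/-- The Riesz potential `I_α`. -/
noncomputable def Riesz (α : ℝ) (n : ℕ) : ℝ :=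
  (4 * n / (4 ^ α * Real.sqrt 2)) * Real.Gamma (3/2 - α) *
    Real.Gamma (n + α - 1) / (Real.Gamma α * Real.Gamma (n - α + 2))

noncomputable def wf (θ : ℝ) : ℝ := 2 - 2 * Real.cos θ

lemma wf_pos {θ : ℝ} (h : θ ∈ Set.Ioo 0 π) : 0 < wf θ := by
  unfold wf
  have : Real.cos θ < Real.cos 0 := Real.cos_lt_cos_of_nonneg_of_le_pi le_rfl h.2.le h.1
  rw [Real.cos_zero] at this; linarith

lemma wf_nonneg (θ : ℝ) : 0 ≤ wf θ := by
  unfold wf; linarith [Real.cos_le_one θ]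

lemma wf_cont : Continuous wf := by unfold wf; fun_prop

lemma real_beta {u v : ℝ} (hu : 0 < u) (hv : 0 < v) :
    MeasureTheory.IntegrableOn (fun x : ℝ => x ^ (u - 1) * (1 - x) ^ (v - 1)) (Set.Ioo 0 1) ∧
    ∫ x in Set.Ioo (0:ℝ) 1, x ^ (u - 1) * (1 - x) ^ (v - 1) =
      Real.Gamma u * Real.Gamma v / Real.Gamma (u + v) := by
  have hc := Complex.betaIntegral_convergent (u := (u:ℂ)) (v := (v:ℂ)) (by simpa) (by simpa)
  rw [intervalIntegrable_iff_integrableOn_Ioo_of_le (by simp)] at hc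
  have heq : Set.EqOn (fun x : ℝ => (x:ℂ) ^ ((u:ℂ) - 1) * (1 - (x:ℂ)) ^ ((v:ℂ) - 1))
      (fun x : ℝ => ((x ^ (u - 1) * (1 - x) ^ (v - 1) : ℝ) : ℂ)) (Set.Ioo 0 1) := by
    intro x hx
    simp only
    rw [Complex.ofReal_mul, Complex.ofReal_cpow hx.1.le, Complex.ofReal_cpow (by linarith [hx.2])]
    push_cast; rfl
  have hb := Complex.betaIntegral_eq_Gamma_mul_div (u:ℂ) (v:ℂ) (by simpa) (by simpa)
  rw [Complex.betaIntegral, intervalIntegral.integral_of_le (by norm_num),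
    MeasureTheory.integral_Ioc_eq_integral_Ioo,
    MeasureTheory.setIntegral_congr_fun measurableSet_Ioo heq, integral_complex_ofReal] at hb
  rw [MeasureTheory.integrableOn_congr_fun heq measurableSet_Ioo] at hc
  refine ⟨?_, ?_⟩
  · have h3 := hc.re
    unfold MeasureTheory.IntegrableOn
    simpa using h3
  · rw [← Complex.ofReal_add, Complex.Gamma_ofReal, Complex.Gamma_ofReal, Complex.Gamma_ofReal] at hb
    exact_mod_cast hb

lemma wf_int {s : ℝ} (hs : -(1/2) < s) :
    MeasureTheory.IntegrableOn (fun θ : ℝ => wf θ ^ s) (Set.Ioo 0 π) ∧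
    ∫ θ in Set.Ioo 0 π, wf θ ^ s = 4 ^ s * √π * Real.Gamma (s + 1/2) / Real.Gamma (s + 1) := by
  obtain ⟨h1, h2⟩ := real_beta (u := s + 1/2) (v := 1/2) (by linarith) (by norm_num)
  have himg : (fun θ : ℝ => (1 - Real.cos θ) / 2) '' Set.Ioo 0 π = Set.Ioo 0 1 := by
    ext x; constructor
    · rintro ⟨θ, hθ, rfl⟩
      have := wf_pos hθ
      have h3 : Real.cos π < Real.cos θ :=
        Real.cos_lt_cos_of_nonneg_of_le_pi hθ.1.le le_rfl hθ.2
      rw [Real.cos_pi] at h3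
      unfold wf at this
      constructor <;> simp only <;> linarith
    · intro hx
      refine ⟨Real.arccos (1 - 2 * x), ⟨?_, ?_⟩, ?_⟩
      · rw [Real.arccos_pos]; linarith [hx.1]
      · rw [Real.arccos_lt_pi]; linarith [hx.2]
      · simp only
        rw [Real.cos_arccos (by linarith [hx.2]) (by linarith [hx.1])]; ring
  have hd : ∀ θ ∈ Set.Ioo 0 π, HasDerivWithinAt (fun θ : ℝ => (1 - Real.cos θ) / 2)
      (Real.sin θ / 2) (Set.Ioo 0 π) θ := by
    intro θ _
    have := ((Real.hasDerivAt_cos θ).const_sub 1).div_const 2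
    simpa using this.hasDerivWithinAt
  have hinj : Set.InjOn (fun θ : ℝ => (1 - Real.cos θ) / 2) (Set.Ioo 0 π) := by
    intro a ha b hb hab
    exact Real.injOn_cos ⟨ha.1.le, ha.2.le⟩ ⟨hb.1.le, hb.2.le⟩ (by simp only at hab; linarith)
  have heq : Set.EqOn (fun θ : ℝ => |Real.sin θ / 2| • (((1 - Real.cos θ) / 2) ^ (s + 1/2 - 1) *
      (1 - (1 - Real.cos θ) / 2) ^ ((1:ℝ)/2 - 1))) (fun θ => (4 ^ s)⁻¹ * wf θ ^ s) (Set.Ioo 0 π) := by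
    intro θ hθ
    have hw := wf_pos hθ
    have hsin := Real.sin_pos_of_pos_of_lt_pi hθ.1 hθ.2
    have h3 : Real.cos π < Real.cos θ :=
        Real.cos_lt_cos_of_nonneg_of_le_pi hθ.1.le le_rfl hθ.2
    rw [Real.cos_pi] at h3
    have hx : 0 < (1 - Real.cos θ) / 2 := by unfold wf at hw; linarith
    have hy : 0 < 1 - (1 - Real.cos θ) / 2 := by linarith
    simp only [smul_eq_mul]
    rw [abs_of_pos (by linarith)]
    have e1 : Real.sin θ / 2 = ((1 - Real.cos θ) / 2) ^ ((1:ℝ)/2) *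
        (1 - (1 - Real.cos θ) / 2) ^ ((1:ℝ)/2) := by
      rw [← Real.mul_rpow hx.le hy.le, ← Real.sqrt_eq_rpow, eq_comm, Real.sqrt_eq_iff_mul_self_eq_of_pos (by linarith)]
      nlinarith [Real.sin_sq_add_cos_sq θ]
    have e2 : wf θ = 4 * ((1 - Real.cos θ) / 2) := by unfold wf; ring
    rw [e1, e2, Real.mul_rpow (by norm_num) hx.le]
    set x := (1 - Real.cos θ) / 2
    have e3 : x ^ ((1:ℝ)/2) * x ^ (s + 1/2 - 1) = x ^ s := by
      rw [← Real.rpow_add hx]; congr 1; ring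
    have e4 : (1 - x) ^ ((1:ℝ)/2) * (1 - x) ^ ((1:ℝ)/2 - 1) = 1 := by
      rw [← Real.rpow_add hy]; norm_num
    have e5 : (4:ℝ) ^ s ≠ 0 := by positivity
    calc _ = (x ^ ((1:ℝ)/2) * x ^ (s + 1/2 - 1)) * ((1 - x) ^ ((1:ℝ)/2) * (1 - x) ^ ((1:ℝ)/2 - 1)) := by ring
      _ = _ := by rw [e3, e4]; field_simp
  have e5 : (4:ℝ) ^ s ≠ 0 := by positivity
  rw [← himg, MeasureTheory.integrableOn_image_iff_integrableOn_abs_deriv_smul measurableSet_Ioo hd hinj,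
    MeasureTheory.integrableOn_congr_fun heq measurableSet_Ioo] at h1
  rw [← himg, MeasureTheory.integral_image_eq_integral_abs_deriv_smul measurableSet_Ioo hd hinj,
    MeasureTheory.setIntegral_congr_fun measurableSet_Ioo heq, MeasureTheory.integral_const_mul,
    Real.Gamma_one_half_eq] at h2
  constructor
  · have := h1.const_mul (4 ^ s)
    refine this.congr (Filter.Eventually.of_forall fun θ => ?_)
    field_simp
  · rw [inv_mul_eq_iff_eq_mul₀ e5, show s + 1 / 2 + 1 / 2 = s + 1 by ring] at h2
    rw [h2]; ring

lemma abs_sin_nat (n : ℕ) (θ : ℝ) : |Real.sin (n * θ)| ≤ n * |Real.sin θ| := by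
  induction n with
  | zero => simp
  | succ n ih =>
    push_cast
    rw [add_mul, one_mul, Real.sin_add]
    calc _ ≤ |Real.sin (n * θ) * Real.cos θ| + |Real.cos (n * θ) * Real.sin θ| := abs_add_le _ _
      _ ≤ |Real.sin (n * θ)| * 1 + 1 * |Real.sin θ| := by
        rw [abs_mul, abs_mul]
        gcongr
        · exact Real.abs_cos_le_one _
        · exact Real.abs_cos_le_one _
      _ ≤ _ := by linarith

lemma sin_sq_eq_wf (θ : ℝ) : Real.sin θ ^ 2 = wf θ - wf θ ^ 2 / 4 := by
  unfold wf; nlinarith [Real.sin_sq_add_cos_sq θ]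

lemma wf_eq (θ : ℝ) : wf θ = 4 * Real.sin (θ / 2) ^ 2 := by
  unfold wf
  have : Real.cos θ = Real.cos (2 * (θ / 2)) := by congr 1; ring
  rw [this, Real.cos_two_mul]; nlinarith [Real.sin_sq_add_cos_sq (θ / 2)]

lemma hasDeriv_wf (s x θ : ℝ) (hθ : θ ∈ Set.Ioo 0 π) :
    HasDerivAt (fun θ => wf θ ^ (s + 1/2) * Real.cos ((x + 1/2) * θ))
      (wf θ ^ s * ((s + x + 1) * Real.cos ((x + 1) * θ) + (s - x) * Real.cos (x * θ))) θ := by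
  have hw := wf_pos hθ
  have h1 : HasDerivAt wf (2 * Real.sin θ) θ := by
    have := ((Real.hasDerivAt_cos θ).const_mul 2).const_sub 2
    unfold wf; simpa using this
  have h2 := h1.rpow_const (p := s + 1/2) (Or.inl hw.ne')
  have h3 : HasDerivAt (fun θ => Real.cos ((x + 1/2) * θ))
      (-Real.sin ((x + 1/2) * θ) * ((x + 1/2) * 1)) θ :=
    ((hasDerivAt_id θ).const_mul (x + 1/2)).cos
  refine (h2.mul h3).congr_deriv ?_
  have hs2 : 0 < Real.sin (θ / 2) :=
    Real.sin_pos_of_pos_of_lt_pi (by linarith [hθ.1]) (by linarith [hθ.2, hθ.1])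
  have hw2 : wf θ ^ ((1:ℝ)/2) = 2 * Real.sin (θ / 2) := by
    rw [wf_eq, ← Real.sqrt_eq_rpow, Real.sqrt_eq_iff_mul_self_eq_of_pos (by linarith)]; ring
  have e1 : wf θ ^ (s + 1/2) = wf θ ^ s * (2 * Real.sin (θ / 2)) := by
    rw [Real.rpow_add hw, hw2]
  have e2 : wf θ ^ (s + 1/2 - 1) = wf θ ^ s / (2 * Real.sin (θ / 2)) := by
    rw [eq_div_iff (by positivity), ← hw2, ← Real.rpow_add hw]; congr 1; ring
  rw [e1, e2]
  have e3 : Real.sin θ = 2 * Real.sin (θ / 2) * Real.cos (θ / 2) := by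
    rw [← Real.sin_two_mul]; congr 1; ring
  have e4 : Real.cos ((x + 1) * θ) = Real.cos ((x + 1/2) * θ) * Real.cos (θ / 2)
      - Real.sin ((x + 1/2) * θ) * Real.sin (θ / 2) := by
    rw [← Real.cos_add]; congr 1; ring
  have e5 : Real.cos (x * θ) = Real.cos ((x + 1/2) * θ) * Real.cos (θ / 2)
      + Real.sin ((x + 1/2) * θ) * Real.sin (θ / 2) := by
    rw [← Real.cos_sub]; congr 1; ring
  rw [e3, e4, e5]
  field_simp
  ring

noncomputable def bco (s : ℝ) (j : ℤ) : ℝ := (1 / π) * ∫ θ in Set.Ioo 0 π, Real.cos (j * θ) * wf θ ^ s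

lemma cos_wf_int {s : ℝ} (hs : -(1/2) < s) (x : ℝ) :
    MeasureTheory.IntegrableOn (fun θ : ℝ => Real.cos (x * θ) * wf θ ^ s) (Set.Ioo 0 π) := by
  refine (wf_int hs).1.bdd_mul (c := 1) (by fun_prop) (Filter.Eventually.of_forall fun θ => ?_)
  rw [Real.norm_eq_abs]; exact Real.abs_cos_le_one _

lemma bco_rec {s : ℝ} (hs : -(1/2) < s) (j : ℤ) :
    (s + j + 1) * bco s (j + 1) = (j - s) * bco s j := by
  have hi : MeasureTheory.IntegrableOn (fun θ => wf θ ^ s * ((s + j + 1) * Real.cos ((j + 1) * θ) + (s - j) * Real.cos (j * θ))) (Set.Ioo 0 π) := by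
    have := ((cos_wf_int hs (j + 1)).const_mul (s + j + 1)).add ((cos_wf_int hs j).const_mul (s - j))
    refine this.congr (Filter.Eventually.of_forall fun θ => ?_)
    simp only [Pi.add_apply]; ring
  have h := intervalIntegral.integral_eq_sub_of_hasDerivAt_of_le (a := 0) (b := π)
    (f := fun θ => wf θ ^ (s + 1/2) * Real.cos ((j + 1/2) * θ)) Real.pi_pos.le
    (by
      apply Continuous.continuousOn
      exact (wf_cont.rpow_const (fun x => Or.inr (by linarith))).mul (by fun_prop))
    (fun θ hθ => hasDeriv_wf s j θ hθ)
    (by rw [intervalIntegrable_iff_integrableOn_Ioo_of_le Real.pi_pos.le]; exact hi)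
  have hpi : Real.cos ((j + 1/2) * π) = 0 := by
    rw [Real.cos_eq_zero_iff]; exact ⟨j, by ring⟩
  have h0 : wf 0 ^ (s + 1/2) = 0 := by
    rw [show wf 0 = 0 by simp [wf], Real.zero_rpow (by linarith)]
  simp only [hpi, h0, mul_zero, zero_mul, sub_zero] at h
  rw [intervalIntegral.integral_of_le Real.pi_pos.le, MeasureTheory.integral_Ioc_eq_integral_Ioo] at h
  have h2 : ∫ θ in Set.Ioo 0 π, wf θ ^ s * ((s + j + 1) * Real.cos ((j + 1) * θ) + (s - j) * Real.cos (j * θ))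
     = (s + j + 1) * (∫ θ in Set.Ioo 0 π, Real.cos ((j + 1) * θ) * wf θ ^ s) + (s - j) * ∫ θ in Set.Ioo 0 π, Real.cos (j * θ) * wf θ ^ s := by
    rw [← MeasureTheory.integral_const_mul, ← MeasureTheory.integral_const_mul, ← MeasureTheory.integral_add
      ((cos_wf_int hs (j + 1)).const_mul (s + j + 1)) ((cos_wf_int hs j).const_mul (s - j))]
    congr 1; ext θ; ring
  rw [h2] at h
  unfold bco
  push_cast
  linear_combination (1 / π) * h

noncomputable def JJ (s : ℝ) (n : ℕ) : ℝ := ∫ θ in Set.Ioo 0 π, Real.sin (n * θ) * Real.sin θ * wf θ ^ s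

lemma JJ_int {s : ℝ} (hs : -(3/2) < s) (n : ℕ) :
    MeasureTheory.IntegrableOn (fun θ : ℝ => Real.sin (n * θ) * Real.sin θ * wf θ ^ s) (Set.Ioo 0 π) := by
  have h := ((wf_int (s := s + 1) (by linarith)).1).const_mul (n : ℝ)
  refine MeasureTheory.Integrable.mono' h ?_ ?_
  · apply Measurable.aestronglyMeasurable
    have := wf_cont.measurable
    fun_prop
  · refine MeasureTheory.ae_restrict_of_forall_mem measurableSet_Ioo fun θ hθ => ?_
    have hw := wf_pos hθ
    have hn := abs_sin_nat n θ
    have hsq := sin_sq_eq_wf θ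
    rw [Real.norm_eq_abs, abs_mul, abs_mul, abs_of_nonneg (a := wf θ ^ s) (by positivity),
      Real.rpow_add hw, Real.rpow_one]
    have h1 : |Real.sin (n * θ)| * |Real.sin θ| ≤ n * wf θ := by
      calc _ ≤ (n * |Real.sin θ|) * |Real.sin θ| := by gcongr
        _ = n * Real.sin θ ^ 2 := by rw [mul_assoc, abs_mul_abs_self, sq]
        _ ≤ _ := by gcongr; rw [hsq]; nlinarith [sq_nonneg (wf θ)]
    calc _ ≤ n * wf θ * wf θ ^ s := by gcongr
      _ = _ := by ring

lemma JJ_rec {s : ℝ} (hs : -(3/2) < s) (n : ℕ) :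
    n * (n + s + 2) * JJ s (n + 1) = (n + 1) * (n - s - 1) * JJ s n := by
  set x : ℝ := (n : ℝ)
  set H : ℝ → ℝ := fun θ => (x + 1)/2 * (wf θ ^ (s + 1/2) * Real.cos ((x - 1 + 1/2) * θ))
    - 1/2 * (wf θ ^ (s + 1/2) * Real.cos ((x + 1/2) * θ))
    - x/2 * (wf θ ^ (s + 1/2) * Real.cos ((x + 1 + 1/2) * θ)) with hH
  have hd : ∀ θ ∈ Set.Ioo 0 π, HasDerivAt H
      (x * (x + s + 2) * (Real.sin ((n + 1 : ℕ) * θ) * Real.sin θ * wf θ ^ s)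
      - (x + 1) * (x - s - 1) * (Real.sin (x * θ) * Real.sin θ * wf θ ^ s)) θ := by
    intro θ hθ
    have h := (((hasDeriv_wf s (x - 1) θ hθ).const_mul ((x + 1)/2)).sub
      ((hasDeriv_wf s x θ hθ).const_mul (1/2))).sub ((hasDeriv_wf s (x + 1) θ hθ).const_mul (x/2))
    refine h.congr_deriv ?_
    have f1 : Real.cos ((x - 1) * θ) = Real.cos (x * θ) * Real.cos θ + Real.sin (x * θ) * Real.sin θ := by
      rw [← Real.cos_sub]; congr 1; ring
    have f2 : Real.cos ((x + 1) * θ) = Real.cos (x * θ) * Real.cos θ - Real.sin (x * θ) * Real.sin θ := by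
      rw [← Real.cos_add]; congr 1; ring
    have f3 : Real.sin (((n + 1 : ℕ) : ℝ) * θ) = Real.sin (x * θ) * Real.cos θ + Real.cos (x * θ) * Real.sin θ := by
      rw [← Real.sin_add]; congr 1; push_cast; ring
    have f4 : Real.cos ((x + 1 + 1) * θ) = Real.cos ((x + 1) * θ) * Real.cos θ - Real.sin (((n + 1 : ℕ) : ℝ) * θ) * Real.sin θ := by
      rw [show (((n + 1 : ℕ) : ℝ)) = x + 1 by push_cast; rfl, ← Real.cos_add]; congr 1; ring
    rw [show x - 1 + 1 = x by ring, f4, f3, f2, f1]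
    have hc := Real.sin_sq_add_cos_sq θ
    have hc2 : Real.sin θ ^ 2 = 1 - Real.cos θ ^ 2 := by linarith
    linear_combination (-(wf θ ^ s) * Real.cos (x * θ) * (x * (x + s + 2)) / 2) * hc
  have hi := ((JJ_int hs (n+1)).const_mul (x * (x + s + 2))).sub ((JJ_int hs n).const_mul ((x + 1) * (x - s - 1)))
  have hpi : Filter.Tendsto H (nhdsWithin π (Set.Iio π)) (nhds 0) := by
    have : H π = 0 := by
      have g1 : Real.cos ((x - 1 + 1/2) * π) = 0 := by
        rw [Real.cos_eq_zero_iff]; exact ⟨(n:ℤ) - 1, by push_cast; ring⟩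
      have g2 : Real.cos ((x + 1/2) * π) = 0 := by
        rw [Real.cos_eq_zero_iff]; exact ⟨(n:ℤ), by push_cast; ring⟩
      have g3 : Real.cos ((x + 1 + 1/2) * π) = 0 := by
        rw [Real.cos_eq_zero_iff]; exact ⟨(n:ℤ) + 1, by push_cast; ring⟩
      simp only [hH, g1, g2, g3]; ring
    rw [← this]
    apply Filter.Tendsto.mono_left _ nhdsWithin_le_nhds
    have hw : ContinuousAt (fun θ => wf θ ^ (s + 1/2)) π :=
      wf_cont.continuousAt.rpow_const (Or.inl (by simp [wf]))
    have : ContinuousAt H π := by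
      rw [hH]
      fun_prop
    exact this
  have h0 : Filter.Tendsto H (nhdsWithin 0 (Set.Ioi 0)) (nhds 0) := by
    obtain ⟨C, hC⟩ : ∃ C : ℝ, ∀ θ ∈ Set.Ioo 0 π, |H θ| ≤ C * wf θ ^ (s + 3/2) := by
      set M := (|x + 1|/2 * (x - 1 + 1/2)^2/2 + 1/2 * (x + 1/2)^2 /2 + |x|/2 * (x + 1 + 1/2)^2/2)
      refine ⟨M * (π ^ 2 / 4), fun θ hθ => ?_⟩
      have hw := wf_pos hθ
      have hq : ∀ y : ℝ, |Real.cos (y * θ) - 1| ≤ y^2/2 * θ^2 := by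
        intro y
        rw [abs_le]
        constructor
        · nlinarith [Real.one_sub_sq_div_two_le_cos (x := y * θ)]
        · have := Real.cos_le_one (y * θ)
          have : 0 ≤ y^2/2*θ^2 := by positivity
          linarith
      have hθw : θ ^ 2 ≤ π ^ 2 / 4 * wf θ := by
        have h1 := Real.cos_le_one_sub_mul_cos_sq (x := θ) (by rw [abs_of_pos hθ.1]; exact hθ.2.le)
        unfold wf
        have hp := Real.pi_pos
        have : 2 / π ^ 2 * θ ^ 2 ≤ 1 - Real.cos θ := by linarith
        calc θ ^ 2 = π ^ 2 / 2 * (2 / π ^ 2 * θ ^ 2) := by field_simp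
          _ ≤ π ^ 2 / 2 * (1 - Real.cos θ) := by gcongr
          _ = _ := by ring
      have heq : H θ = wf θ ^ (s + 1/2) * ((x + 1)/2 * (Real.cos ((x - 1 + 1/2) * θ) - 1)
        - 1/2 * (Real.cos ((x + 1/2) * θ) - 1) - x/2 * (Real.cos ((x + 1 + 1/2) * θ) - 1)) := by
        simp only [hH]; ring
      have hpw : wf θ ^ (s + 3/2) = wf θ ^ (s + 1/2) * wf θ := by
        rw [← Real.rpow_add_one hw.ne']; congr 1; ring
      rw [heq, hpw, abs_mul, abs_of_pos (a := wf θ ^ (s + 1/2)) (by positivity)]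
      have hb : |(x + 1)/2 * (Real.cos ((x - 1 + 1/2) * θ) - 1)
        - 1/2 * (Real.cos ((x + 1/2) * θ) - 1) - x/2 * (Real.cos ((x + 1 + 1/2) * θ) - 1)| ≤ M * θ ^ 2 := by
        calc _ ≤ |(x + 1)/2 * (Real.cos ((x - 1 + 1/2) * θ) - 1)| + |1/2 * (Real.cos ((x + 1/2) * θ) - 1)|
              + |x/2 * (Real.cos ((x + 1 + 1/2) * θ) - 1)| :=
              (abs_sub _ _).trans (add_le_add_left (abs_sub _ _) _)
          _ = |x + 1|/2 * |Real.cos ((x - 1 + 1/2) * θ) - 1| + 1/2 * |Real.cos ((x + 1/2) * θ) - 1|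
              + |x|/2 * |Real.cos ((x + 1 + 1/2) * θ) - 1| := by
              simp only [abs_mul, abs_div]; norm_num
          _ ≤ |x + 1|/2 * ((x - 1 + 1/2)^2/2 * θ^2) + 1/2 * ((x + 1/2)^2/2*θ^2)
              + |x|/2 * ((x + 1 + 1/2)^2/2*θ^2) := by
              gcongr <;> apply hq
          _ = _ := by simp only [M]; ring
      have hM : 0 ≤ M := by simp only [M]; positivity
      calc _ ≤ wf θ ^ (s + 1/2) * (M * (π ^ 2 / 4 * wf θ)) := by
            gcongr
            exact hb.trans (by gcongr)
        _ = _ := by ring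
    have hlim : Filter.Tendsto (fun θ => C * wf θ ^ (s + 3/2)) (nhdsWithin 0 (Set.Ioi 0)) (nhds 0) := by
      apply Filter.Tendsto.mono_left _ nhdsWithin_le_nhds
      have hc : Continuous (fun θ => C * wf θ ^ (s + 3/2)) :=
        continuous_const.mul (wf_cont.rpow_const (fun x => Or.inr (by linarith)))
      have := hc.tendsto 0
      rwa [show wf 0 = 0 by simp [wf], Real.zero_rpow (by linarith), mul_zero] at this
    refine squeeze_zero_norm' ?_ hlim
    filter_upwards [Ioo_mem_nhdsGT Real.pi_pos] with θ hθ
    exact hC θ hθ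
  have h := intervalIntegral.integral_eq_sub_of_hasDerivAt_of_tendsto Real.pi_pos hd
    (by rw [intervalIntegrable_iff_integrableOn_Ioo_of_le Real.pi_pos.le]; exact hi) h0 hpi
  rw [intervalIntegral.integral_of_le Real.pi_pos.le, MeasureTheory.integral_Ioc_eq_integral_Ioo,
    MeasureTheory.integral_sub ((JJ_int hs (n+1)).const_mul _) ((JJ_int hs n).const_mul _),
    MeasureTheory.integral_const_mul, MeasureTheory.integral_const_mul] at h
  unfold JJ
  linarith

lemma JJ_one {s : ℝ} (hs : -(3/2) < s) :
    JJ s 1 = 4 ^ (s + 1) * √π * Real.Gamma (s + 3/2) / (2 * Real.Gamma (s + 3)) := by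
  have h1 := wf_int (s := s + 1) (by linarith)
  have h2 := wf_int (s := s + 2) (by linarith)
  have : JJ s 1 = ∫ θ in Set.Ioo 0 π, (wf θ ^ (s + 1) - 1/4 * wf θ ^ (s + 2)) := by
    unfold JJ
    refine MeasureTheory.setIntegral_congr_fun measurableSet_Ioo fun θ hθ => ?_
    have hw := wf_pos hθ
    simp only [Nat.cast_one, one_mul]
    rw [← sq, sin_sq_eq_wf, Real.rpow_add hw, Real.rpow_add hw, Real.rpow_one, Real.rpow_two]
    ring
  rw [this, MeasureTheory.integral_sub h1.1 (h2.1.const_mul _), MeasureTheory.integral_const_mul, h1.2, h2.2]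
  have g1 := Real.Gamma_add_one (s := s + 3/2) (by linarith)
  have g2 := Real.Gamma_add_one (s := s + 2) (by linarith)
  have p2 := Real.Gamma_pos_of_pos (show 0 < s + 2 by linarith)
  have p3 : s + 2 ≠ 0 := by linarith
  rw [show s + 1 + 1/2 = s + 3/2 by ring, show s + 1 + 1 = s + 2 by ring, show s + 2 + 1/2 = s + 3/2 + 1 by ring,
    g1, show s + 3 = s + 2 + 1 by ring, g2]
  have p4 : (4:ℝ) ^ (s + 2) = 4 ^ (s + 1) * 4 := by
    rw [← Real.rpow_add_one (by norm_num)]; congr 1; ring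
  rw [p4]
  field_simp
  ring

lemma JJ_Riesz {α : ℝ} (h0 : 0 < α) (h1 : α < 3/2) (n : ℕ) (hn : 1 ≤ n) :
    Riesz α n = √2 / √π * JJ (-α) n := by
  induction n, hn using Nat.le_induction with
  | base =>
    rw [JJ_one (by linarith)]
    unfold Riesz
    have e1 := (Real.Gamma_pos_of_pos h0).ne'
    have e2 := (Real.Gamma_pos_of_pos (show 0 < 3 - α by linarith)).ne'
    have e3 : √π ≠ 0 := by positivity
    have e4 : √2 * √2 = 2 := by norm_num
    rw [show ((1:ℕ):ℝ) + α - 1 = α by push_cast; ring, show ((1:ℕ):ℝ) - α + 2 = 3 - α by push_cast; ring,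
      show -α + 3/2 = 3/2 - α by ring, show -α + 3 = 3 - α by ring, Real.rpow_add_one (by norm_num),
      Real.rpow_neg (by norm_num)]
    push_cast
    field_simp
    rw [Real.sq_sqrt (by norm_num)]
  | succ n hn ih =>
    have hr := JJ_rec (s := -α) (by linarith) n
    have hn' : (1:ℝ) ≤ n := by exact_mod_cast hn
    have e1 := (Real.Gamma_pos_of_pos h0).ne'
    have p1 : (n:ℝ) - α + 2 ≠ 0 := by linarith
    have p2 : (n:ℝ) + α - 1 ≠ 0 := by linarith
    have e2 := (Real.Gamma_pos_of_pos (show 0 < (n:ℝ) - α + 2 by linarith)).ne'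
    have hR : n * (n + -α + 2) * Riesz α (n + 1) = (n + 1) * (n - -α - 1) * Riesz α n := by
      unfold Riesz
      rw [show ((n+1:ℕ):ℝ) + α - 1 = (n + α - 1) + 1 by push_cast; ring,
        show ((n+1:ℕ):ℝ) - α + 2 = (n - α + 2) + 1 by push_cast; ring,
        Real.Gamma_add_one p1, Real.Gamma_add_one p2]
      push_cast
      field_simp
      ring
    have hne : (n:ℝ) * (n + -α + 2) ≠ 0 := mul_ne_zero (by linarith) (by linarith)
    apply mul_left_cancel₀ hne
    rw [hR, ih]
    linear_combination (-√2/√π) * hr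

lemma gamma_prod {u : ℝ} (hu : 0 < u) (n : ℕ) :
    Real.Gamma (u + n + 1) = (∏ j ∈ Finset.range (n + 1), (u + j)) * Real.Gamma u := by
  induction n with
  | zero => simp [Real.Gamma_add_one hu.ne']
  | succ n ih =>
    rw [Finset.prod_range_succ, show u + ((n + 1 : ℕ) : ℝ) + 1 = (u + n + 1) + 1 by push_cast; ring,
      Real.Gamma_add_one (by positivity), ih]
    push_cast; ring

lemma gamma_ratio {x y : ℝ} (hx : -1 < x) (hy : -1 < y) :
    ∃ C : ℝ, 0 < C ∧ ∀ n : ℕ, 1 ≤ n → Real.Gamma (n + x) / Real.Gamma (n + y) ≤ C * (n:ℝ) ^ (x - y) := by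
  have key : ∀ x : ℝ, -1 < x → ∀ n : ℕ, 1 ≤ n →
      Real.Gamma (n + x) * ((n + x) * (n + x + 1)) * Real.GammaSeq (x + 1) n =
        Real.Gamma (x + 1) * ((n:ℝ) ^ (x + 1) * n.factorial) := by
    intro x hx n hn
    have hn' : (1:ℝ) ≤ n := by exact_mod_cast hn
    have h := gamma_prod (u := x + 1) (by linarith) n
    rw [show x + 1 + n + 1 = (n + x + 1) + 1 by ring, Real.Gamma_add_one (by linarith),
      Real.Gamma_add_one (by linarith)] at h
    unfold Real.GammaSeq
    have hp : 0 < ∏ j ∈ Finset.range (n + 1), (x + 1 + (j:ℝ)) := by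
      apply Finset.prod_pos; intro j _
      have : (0:ℝ) ≤ j := by positivity
      linarith
    have h' : Real.Gamma (n + x) * ((n + x) * (n + x + 1)) = (∏ j ∈ Finset.range (n + 1), (x + 1 + (j:ℝ))) * Real.Gamma (x + 1) := by
      rw [← h]; ring
    rw [h']
    field_simp
  have gpos : ∀ x : ℝ, -1 < x → ∀ n : ℕ, 1 ≤ n → 0 < Real.GammaSeq (x + 1) n := by
    intro x hx n hn
    have hn' : (1:ℝ) ≤ n := by exact_mod_cast hn
    unfold Real.GammaSeq
    have hp : 0 < ∏ j ∈ Finset.range (n + 1), (x + 1 + (j:ℝ)) := by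
      apply Finset.prod_pos; intro j _
      have : (0:ℝ) ≤ j := by positivity
      linarith
    positivity
  have px := Real.Gamma_pos_of_pos (show 0 < x + 1 by linarith)
  have py := Real.Gamma_pos_of_pos (show 0 < y + 1 by linarith)
  have t1 := (Real.GammaSeq_tendsto_Gamma (y + 1)).div (Real.GammaSeq_tendsto_Gamma (x + 1)) px.ne'
  have t2 := tendsto_add_mul_div_add_mul_atTop_nhds (𝕜 := ℝ) y x 1 (d := 1) one_ne_zero
  have t3 := tendsto_add_mul_div_add_mul_atTop_nhds (𝕜 := ℝ) (y+1) (x+1) 1 (d := 1) one_ne_zero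
  obtain ⟨C, hC⟩ := (((t1.mul t2).mul t3).const_mul (Real.Gamma (x + 1) / Real.Gamma (y + 1))).bddAbove_range
  refine ⟨max C 1, by positivity, fun n hn => ?_⟩
  have hn' : (1:ℝ) ≤ n := by exact_mod_cast hn
  have h1 := hC ⟨n, rfl⟩
  simp only [Pi.div_apply] at h1
  have kx := key x hx n hn
  have ky := key y hy n hn
  have qx := gpos x hx n hn
  have qy := gpos y hy n hn
  have gx := Real.Gamma_pos_of_pos (show 0 < n + x by linarith)
  have gy := Real.Gamma_pos_of_pos (show 0 < n + y by linarith)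
  have x1 : 0 < n + x := by linarith
  have x2 : 0 < n + x + 1 := by linarith
  have y1 : 0 < n + y := by linarith
  have y2 : 0 < n + y + 1 := by linarith
  have hpow : (n:ℝ) ^ (x + 1) = (n:ℝ) ^ (x - y) * (n:ℝ) ^ (y + 1) := by
    rw [← Real.rpow_add (by linarith)]; congr 1; ring
  have hnf : (0:ℝ) < n.factorial := by positivity
  have hnp : (0:ℝ) < (n:ℝ) ^ (y + 1) := by positivity
  have hnp2 : (0:ℝ) < (n:ℝ) ^ (x - y) := by positivity
  rw [hpow] at kx
  have e : Real.Gamma (n + x) / Real.Gamma (n + y) = (Real.Gamma (x + 1) / Real.Gamma (y + 1) *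
      (Real.GammaSeq (y + 1) n / Real.GammaSeq (x + 1) n * ((y + 1 * n) / (x + 1 * n)) * ((y + 1 + 1 * n) / (x + 1 + 1 * n)))) * (n:ℝ) ^ (x - y) := by
    have ex : Real.Gamma (n + x) = Real.Gamma (x + 1) * ((n:ℝ) ^ (x - y) * (n:ℝ) ^ (y + 1) * n.factorial) / (((n + x) * (n + x + 1)) * Real.GammaSeq (x + 1) n) := by
      rw [eq_div_iff (by positivity), ← kx]; ring
    have ey : Real.Gamma (n + y) = Real.Gamma (y + 1) * ((n:ℝ) ^ (y + 1) * n.factorial) / (((n + y) * (n + y + 1)) * Real.GammaSeq (y + 1) n) := by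
      rw [eq_div_iff (by positivity), ← ky]; ring
    rw [ex, ey, show y + 1 * (n:ℝ) = n + y by ring, show x + 1 * (n:ℝ) = n + x by ring,
      show y + 1 + 1 * (n:ℝ) = n + y + 1 by ring, show x + 1 + 1 * (n:ℝ) = n + x + 1 by ring]
    field_simp
  rw [e]
  gcongr
  exact h1.trans (le_max_left _ _)

lemma bco_neg (s : ℝ) (j : ℤ) : bco s (-j) = bco s j := by
  unfold bco; simp

lemma bco_rbinom {σ : ℝ} (h0 : 0 < σ) (h1 : σ < 1) (j : ℕ) :
    (-1 : ℝ) ^ j * rbinom (2 * σ) (σ + j) = bco σ j := by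
  induction j with
  | zero =>
    unfold bco
    have := (wf_int (s := σ) (by linarith)).2
    simp only [CharP.cast_eq_zero, Int.cast_zero, zero_mul, Real.cos_zero, one_mul, this, pow_zero, add_zero]
    unfold rbinom
    have hd := Real.Gamma_mul_Gamma_add_half (σ + 1/2)
    rw [show σ + 1/2 + 1/2 = σ + 1 by ring, show 2 * (σ + 1/2) = 2 * σ + 1 by ring,
      show 1 - (2 * σ + 1) = -(2 * σ) by ring, Real.rpow_neg (by norm_num), Real.rpow_mul (by norm_num)] at hd
    norm_num at hd
    have g := (Real.Gamma_pos_of_pos (show 0 < σ + 1 by linarith)).ne'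
    rw [show 2 * σ - σ + 1 = σ + 1 by ring]
    have e4 : (4:ℝ) ^ σ ≠ 0 := by positivity
    have hp : √π * √π = π := Real.mul_self_sqrt Real.pi_pos.le
    have hd2 : Real.Gamma (2 * σ + 1) * √π = Real.Gamma (σ + 1/2) * Real.Gamma (σ + 1) * 4 ^ σ := by
      rw [hd]; field_simp
    rw [div_eq_iff (by positivity)]
    have e5 : √π ≠ 0 := by positivity
    apply mul_right_cancel₀ e5
    rw [hd2]
    have hpi := Real.pi_ne_zero
    field_simp
    rw [sq, hp]
  | succ j ih =>
    have hr := bco_rec (s := σ) (by linarith) (j : ℤ)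
    have hne : σ + j + 1 ≠ 0 := by positivity
    have hne2 : σ - j ≠ 0 := by
      rcases Nat.eq_zero_or_pos j with h | h
      · subst h; simp; linarith
      · have : (1:ℝ) ≤ j := by exact_mod_cast h
        linarith
    push_cast at hr ⊢
    apply mul_left_cancel₀ hne
    rw [hr, ← ih]
    unfold rbinom
    rw [show 2 * σ - (σ + (j + 1)) + 1 = σ - j by ring, show σ + ((j:ℝ) + 1) + 1 = (σ + j + 1) + 1 by ring,
      Real.Gamma_add_one hne, show 2 * σ - (σ + j) + 1 = σ - j + 1 by ring, Real.Gamma_add_one hne2]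
    have g1 : Real.Gamma (σ + j + 1) ≠ 0 := (Real.Gamma_pos_of_pos (by positivity)).ne'
    have g2 : Real.Gamma (σ - j) ≠ 0 := by
      apply Real.Gamma_ne_zero
      intro m hm
      have h3 : σ = ((j - m : ℤ) : ℝ) := by push_cast; linarith
      rw [h3] at h0 h1
      have a : (0:ℤ) < (j:ℤ) - m := by exact_mod_cast h0
      have b : (j:ℤ) - m < 1 := by exact_mod_cast h1
      omega
    rw [pow_succ]
    field_simp
    ring

lemma rbinom_symm (a b : ℝ) : rbinom a (a - b) = rbinom a b := by
  unfold rbinom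
  rw [show a - (a - b) = b by ring, mul_comm (Real.Gamma (b+1))]

lemma Kker_eq {σ : ℝ} (h0 : 0 < σ) (h1 : σ < 1) (m n : ℕ) :
    Kker σ m n = bco σ ((m:ℤ) - n) - bco σ ((m:ℤ) + n) := by
  have e1 : (-1 : ℝ) ^ (m + n) * rbinom (2 * σ) (σ + m + n) = bco σ ((m:ℤ) + n) := by
    have := bco_rbinom h0 h1 (m + n)
    push_cast at this
    rw [← this, add_assoc]
  have e2 : (-1 : ℝ) ^ (m + n) * rbinom (2 * σ) (σ + m - n) = bco σ ((m:ℤ) - n) := by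
    rcases le_total n m with h | h
    · obtain ⟨d, rfl⟩ := Nat.exists_eq_add_of_le h
      have := bco_rbinom h0 h1 d
      rw [show (((n + d : ℕ) : ℤ) - n) = d by push_cast; ring, ← this,
        show σ + ((n + d : ℕ) : ℝ) - n = σ + d by push_cast; ring]
      congr 1
      rw [show n + d + n = 2 * n + d by ring, pow_add, pow_mul]; norm_num
    · obtain ⟨d, rfl⟩ := Nat.exists_eq_add_of_le h
      have := bco_rbinom h0 h1 d
      rw [show ((m : ℤ) - (m + d : ℕ)) = -d by push_cast; ring, bco_neg, ← this,
        show σ + m - ((m + d : ℕ) : ℝ) = 2 * σ - (σ + d) by push_cast; ring, rbinom_symm]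
      congr 1
      rw [show m + (m + d) = 2 * m + d by ring, pow_add, pow_mul]; norm_num
  unfold Kker
  rw [mul_sub, e1, e2]

lemma bco_bound {σ : ℝ} (h0 : 0 < σ) (h1 : σ < 1) :
    ∃ C : ℝ, 0 < C ∧ ∀ n : ℕ, 1 ≤ n → |bco σ n| ≤ C * (n:ℝ) ^ (-(1 + 2 * σ)) := by
  obtain ⟨C, hC, h⟩ := gamma_ratio (x := -σ) (y := σ + 1) (by linarith) (by linarith)
  obtain ⟨c, hc⟩ : ∃ c : ℝ, ∀ n : ℕ, 1 ≤ n → bco σ n = c * (Real.Gamma (n + -σ) / Real.Gamma (n + (σ + 1))) := by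
    refine ⟨bco σ 1 * Real.Gamma (1 + (σ + 1)) / Real.Gamma (1 + -σ), fun n hn => ?_⟩
    have p1 := (Real.Gamma_pos_of_pos (show 0 < 1 + -σ by linarith)).ne'
    have p2 := (Real.Gamma_pos_of_pos (show 0 < 1 + (σ + 1) by linarith)).ne'
    induction n, hn using Nat.le_induction with
    | base => push_cast; field_simp
    | succ n hn ih =>
      have hn' : (1:ℝ) ≤ n := by exact_mod_cast hn
      have hr := bco_rec (s := σ) (by linarith) (n : ℤ)
      have hne : σ + n + 1 ≠ 0 := by positivity
      push_cast at hr ⊢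
      apply mul_left_cancel₀ hne
      rw [hr, ih, show (n:ℝ) + 1 + -σ = (n + -σ) + 1 by ring, show (n:ℝ) + 1 + (σ + 1) = (n + (σ + 1)) + 1 by ring,
        Real.Gamma_add_one (by linarith), Real.Gamma_add_one (by positivity)]
      have p3 := (Real.Gamma_pos_of_pos (show 0 < n + (σ + 1) by positivity)).ne'
      have p4 : (n + (σ + 1)) ≠ 0 := by positivity
      field_simp
      ring
  refine ⟨(|c| + 1) * C, by positivity, fun n hn => ?_⟩
  have hn' : (1:ℝ) ≤ n := by exact_mod_cast hn
  have p3 := (Real.Gamma_pos_of_pos (show 0 < n + (σ + 1) by positivity))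
  have p4 := (Real.Gamma_pos_of_pos (show 0 < n + -σ by linarith))
  have := h n hn
  rw [show -σ - (σ + 1) = -(1 + 2 * σ) by ring] at this
  rw [hc n hn, abs_mul, abs_of_pos (div_pos p4 p3)]
  calc _ ≤ (|c| + 1) * (C * (n:ℝ) ^ (-(1 + 2 * σ))) := by
        gcongr; linarith
    _ = _ := by ring

lemma my_hasSum_congr {ι : Type*} {f g : ι → ℝ} {a : ℝ} (h : ∀ i, f i = g i) (hg : HasSum g a) : HasSum f a := by
  rw [show f = g from funext h]; exact hg

lemma bco_summable {σ : ℝ} (h0 : 0 < σ) (h1 : σ < 1) {τ : ℝ} (ht0 : 0 ≤ τ) (ht : τ < 2 * σ) :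
    Summable (fun n : ℕ => |bco σ n| * (n:ℝ) ^ τ) := by
  obtain ⟨C, hC, h⟩ := bco_bound h0 h1
  rw [← summable_nat_add_iff 1]
  have hs : Summable (fun n : ℕ => C * ((n + 1 : ℕ) : ℝ) ^ (τ - (1 + 2 * σ))) := by
    apply Summable.mul_left
    rw [summable_nat_add_iff 1 (f := fun n : ℕ => (n:ℝ) ^ (τ - (1 + 2 * σ)))]
    exact Real.summable_nat_rpow.2 (by linarith)
  refine Summable.of_nonneg_of_le (fun n => by positivity) (fun n => ?_) hs
  have hp : (0:ℝ) < ((n + 1 : ℕ) : ℝ) := by positivity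
  calc _ ≤ C * ((n + 1 : ℕ) : ℝ) ^ (-(1 + 2 * σ)) * ((n + 1 : ℕ) : ℝ) ^ τ := by
        gcongr; exact h (n + 1) (by omega)
    _ = _ := by rw [mul_assoc, ← Real.rpow_add hp]; congr 2; ring

lemma fourier_wf {σ : ℝ} (h0 : 0 < σ) (h1 : σ < 1) (θ : ℝ) :
    HasSum (fun j : ℤ => (bco σ j : ℂ) * Complex.exp (j * θ * Complex.I)) ((wf θ ^ σ : ℝ) : ℂ) := by
  haveI : Fact (0 < 2 * π) := ⟨by positivity⟩
  have hper : Function.Periodic (fun x : ℝ => ((wf x ^ σ : ℝ) : ℂ)) (2 * π) := by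
    intro x; simp [wf]
  have hcont : Continuous (fun x : ℝ => ((wf x ^ σ : ℝ) : ℂ)) :=
    Complex.continuous_ofReal.comp (wf_cont.rpow_const fun _ => Or.inr h0.le)
  let f : C(AddCircle (2 * π), ℂ) := ⟨hper.lift, continuous_coinduced_dom.mpr hcont⟩
  have hf : ∀ x : ℝ, f (x : AddCircle (2 * π)) = ((wf x ^ σ : ℝ) : ℂ) := fun x => rfl
  have hexp : ∀ (n : ℤ) (x : ℝ), (fourier n (x : AddCircle (2 * π)) : ℂ) = Complex.exp (n * x * Complex.I) := by
    intro n x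
    rw [fourier_coe_apply]
    congr 1
    have : (π : ℂ) ≠ 0 := by exact_mod_cast Real.pi_ne_zero
    push_cast
    field_simp
  have hcoef : ∀ n : ℤ, fourierCoeff f n = (bco σ n : ℂ) := by
    intro n
    rw [fourierCoeff_eq_intervalIntegral _ n (-π)]
    simp only [hexp, hf, smul_eq_mul]
    rw [show -π + 2 * π = π by ring]
    set g : ℝ → ℂ := fun x => Complex.exp (((-n : ℤ) : ℂ) * x * Complex.I) * ((wf x ^ σ : ℝ) : ℂ) with hg
    have hgc : Continuous g := by
      apply Continuous.mul _ hcont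
      fun_prop
    have hi : ∀ a b : ℝ, IntervalIntegrable g MeasureTheory.volume a b := fun a b => hgc.intervalIntegrable a b
    have hi' : IntervalIntegrable (fun x => g (-x)) MeasureTheory.volume 0 π :=
      (hgc.comp continuous_neg).intervalIntegrable _ _
    have e1 : ∫ x in (-π)..π, g x = ∫ x in (0:ℝ)..π, (g (-x) + g x) := by
      rw [← intervalIntegral.integral_add_adjacent_intervals (hi (-π) 0) (hi 0 π),
        intervalIntegral.integral_add hi' (hi 0 π),
        intervalIntegral.integral_comp_neg, neg_zero]
    have e2 : ∀ x : ℝ, g (-x) + g x = ((2 * (Real.cos (n * x) * wf x ^ σ) : ℝ) : ℂ) := by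
      intro x
      simp only [hg]
      have : wf (-x) = wf x := by simp [wf]
      rw [this, ← add_mul]
      push_cast
      rw [show (2:ℂ) * (Complex.cos (n * x) * (wf x ^ σ : ℝ)) = (2 * Complex.cos (n * x)) * (wf x ^ σ : ℝ) by ring,
        Complex.two_cos]
      congr 2 <;> congr 1 <;> ring
    rw [e1]
    simp only [e2]
    rw [intervalIntegral.integral_ofReal, intervalIntegral.integral_const_mul,
      intervalIntegral.integral_of_le Real.pi_pos.le, MeasureTheory.integral_Ioc_eq_integral_Ioo]
    unfold bco
    rw [Complex.real_smul]
    norm_cast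
    have := Real.pi_ne_zero
    field_simp
  have hsum : Summable (fourierCoeff f) := by
    rw [show (fourierCoeff f) = fun n => (bco σ n : ℂ) from funext hcoef]
    have hs := bco_summable h0 h1 (τ := 0) le_rfl (by linarith)
    simp only [Real.rpow_zero, mul_one] at hs
    apply Summable.of_norm
    simp only [Complex.norm_real, Real.norm_eq_abs]
    refine Summable.of_nat_of_neg hs ?_
    simpa only [bco_neg] using hs
  have := has_pointwise_sum_fourier_series_of_summable hsum (θ : AddCircle (2 * π))
  simpa only [hcoef, hexp, hf, smul_eq_mul] using this

lemma Kker_sin {σ : ℝ} (h0 : 0 < σ) (h1 : σ < 1) (m : ℕ) (θ : ℝ) :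
    HasSum (fun n : ℕ => Kker σ m n * Real.sin (n * θ)) (wf θ ^ σ * Real.sin (m * θ)) := by
  have h := fourier_wf h0 h1 θ
  rw [← (Equiv.subLeft (m:ℤ)).hasSum_iff] at h
  have h2 := h.mul_left (Complex.exp (((-(m * θ) : ℝ) : ℂ) * Complex.I))
  have h3 := (Complex.hasSum_im h2).neg
  have h4 : HasSum (fun n : ℤ => bco σ (m - n) * Real.sin (n * θ)) (wf θ ^ σ * Real.sin (m * θ)) := by
    have ev : wf θ ^ σ * Real.sin (m * θ) = -(Complex.exp (((-(m * θ) : ℝ) : ℂ) * Complex.I) * ((wf θ ^ σ : ℝ) : ℂ)).im := by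
      rw [mul_comm (Complex.exp _), Complex.im_ofReal_mul, Complex.exp_ofReal_mul_I_im, Real.sin_neg]
      ring
    rw [ev]
    refine my_hasSum_congr (fun n => ?_) h3
    simp only [Function.comp, Equiv.subLeft_apply]
    rw [mul_left_comm, ← Complex.exp_add, Complex.im_ofReal_mul,
      show ((-(m * θ) : ℝ) : ℂ) * Complex.I + ((m - n : ℤ) : ℂ) * θ * Complex.I
        = ((-(n * θ) : ℝ) : ℂ) * Complex.I by push_cast; ring, Complex.exp_ofReal_mul_I_im, Real.sin_neg]
    ring
  have h5 := h4.nat_add_neg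
  have h6 : wf θ ^ σ * Real.sin (m * θ) = wf θ ^ σ * Real.sin (m * θ) + bco σ (m - 0) * Real.sin (((0:ℤ):ℝ) * θ) := by
    simp
  rw [h6]
  refine my_hasSum_congr (fun n => ?_) h5
  rw [Kker_eq h0 h1]
  push_cast
  rw [sub_neg_eq_add, neg_mul, Real.sin_neg]; ring

lemma Kker_summable {σ : ℝ} (h0 : 0 < σ) (h1 : σ < 1) (m : ℕ) :
    Summable (fun n : ℕ => |Kker σ m n| * (n:ℝ) ^ σ) := by
  rw [← summable_nat_add_iff m]
  have s1 := bco_summable h0 h1 (τ := σ) h0.le (by linarith)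
  have s2 := bco_summable h0 h1 (τ := 0) le_rfl (by linarith)
  have s3 : Summable (fun n : ℕ => |bco σ ((n + 2 * m : ℕ) : ℤ)| * ((n + 2 * m : ℕ) : ℝ) ^ σ) :=
    (summable_nat_add_iff (2 * m) (f := fun n : ℕ => |bco σ n| * (n:ℝ) ^ σ)).2 s1
  refine Summable.of_nonneg_of_le (fun n => by positivity) (fun n => ?_)
    ((s1.add (s2.mul_right ((m:ℝ) ^ σ))).add s3)
  rw [Kker_eq h0 h1]
  have e1 : bco σ ((m:ℤ) - (n + m : ℕ)) = bco σ n := by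
    rw [← bco_neg]; congr 1; push_cast; ring
  have e2 : bco σ ((m:ℤ) + (n + m : ℕ)) = bco σ ((n + 2 * m : ℕ) : ℤ) := by
    congr 1; push_cast; ring
  rw [e1, e2]
  have hle : (((n + m : ℕ) : ℝ)) ^ σ ≤ (n:ℝ) ^ σ + (m:ℝ) ^ σ := by
    push_cast
    exact Real.rpow_add_le_add_rpow (by positivity) (by positivity) h0.le h1.le
  have hle2 : (((n + m : ℕ) : ℝ)) ^ σ ≤ ((n + 2 * m : ℕ) : ℝ) ^ σ := by
    gcongr; omega
  calc _ ≤ (|bco σ n| + |bco σ ((n + 2 * m : ℕ) : ℤ)|) * (((n + m : ℕ) : ℝ)) ^ σ := by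
        gcongr; exact abs_sub _ _
    _ = |bco σ n| * (((n + m : ℕ) : ℝ)) ^ σ + |bco σ ((n + 2 * m : ℕ) : ℤ)| * (((n + m : ℕ) : ℝ)) ^ σ := by ring
    _ ≤ |bco σ n| * ((n:ℝ) ^ σ + (m:ℝ) ^ σ) + |bco σ ((n + 2 * m : ℕ) : ℤ)| * ((n + 2 * m : ℕ) : ℝ) ^ σ := by
        gcongr
    _ = _ := by rw [Real.rpow_zero]; ring

lemma Riesz_eq {α : ℝ} (h0 : 0 < α) (h1 : α < 3/2) (n : ℕ) :
    Riesz α n = √2 / √π * JJ (-α) n := by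
  rcases Nat.eq_zero_or_pos n with h | h
  · subst h; simp [Riesz, JJ]
  · exact JJ_Riesz h0 h1 n h

lemma ground_state {σ α : ℝ} (h0 : 0 < σ) (h1 : σ < 1) (ha : σ < α) (hb : α ≤ (3 + 2 * σ) / 4) (m : ℕ) :
    HasSum (fun n : ℕ => Kker σ m n * Riesz α n) (Riesz (α - σ) m) := by
  have hi := fun n => (JJ_int (s := -α) (by linarith) n).const_mul (Kker σ m n)
  have hB := (wf_int (s := σ/2 + 1/2 - α) (by linarith)).1
  set B := ∫ θ in Set.Ioo 0 π, wf θ ^ (σ/2 + 1/2 - α) with hBdef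
  have hs : Summable (fun n : ℕ => ∫ θ in Set.Ioo 0 π, ‖Kker σ m n * (Real.sin (n * θ) * Real.sin θ * wf θ ^ (-α))‖) := by
    refine Summable.of_nonneg_of_le (fun n => MeasureTheory.integral_nonneg fun θ => norm_nonneg _) (fun n => ?_)
      ((Kker_summable h0 h1 m).mul_right B)
    rw [hBdef, ← MeasureTheory.integral_const_mul]
    refine MeasureTheory.setIntegral_mono_on (hi n).norm (hB.const_mul _) measurableSet_Ioo fun θ hθ => ?_
    have hw := wf_pos hθ
    have hsin := Real.sin_pos_of_pos_of_lt_pi hθ.1 hθ.2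
    rw [Real.norm_eq_abs, abs_mul, mul_assoc |Kker σ m n|]
    apply mul_le_mul_of_nonneg_left _ (abs_nonneg _)
    rw [abs_mul, abs_mul, abs_of_pos hsin, abs_of_pos (a := wf θ ^ (-α)) (by positivity)]
    have b1 : |Real.sin (n * θ)| ≤ (n:ℝ) ^ σ * Real.sin θ ^ σ := by
      calc |Real.sin (n * θ)| = |Real.sin (n * θ)| ^ (1:ℝ) := (Real.rpow_one _).symm
        _ ≤ |Real.sin (n * θ)| ^ σ :=
          Real.rpow_le_rpow_of_exponent_ge' (abs_nonneg _) (Real.abs_sin_le_one _) h0.le h1.le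
        _ ≤ (n * |Real.sin θ|) ^ σ := by gcongr; exact abs_sin_nat n θ
        _ = _ := by rw [abs_of_pos hsin, Real.mul_rpow (by positivity) hsin.le]
    have b2 : Real.sin θ ≤ wf θ ^ ((1:ℝ)/2) := by
      rw [← Real.sqrt_eq_rpow]
      apply Real.le_sqrt_of_sq_le
      rw [sin_sq_eq_wf]; nlinarith [sq_nonneg (wf θ)]
    have b3 : Real.sin θ ^ σ * Real.sin θ ≤ wf θ ^ (σ/2 + 1/2) := by
      calc _ ≤ (wf θ ^ ((1:ℝ)/2)) ^ σ * wf θ ^ ((1:ℝ)/2) := by gcongr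
        _ = _ := by rw [← Real.rpow_mul hw.le, ← Real.rpow_add hw]; congr 1; ring
    calc _ ≤ (n:ℝ) ^ σ * Real.sin θ ^ σ * Real.sin θ * wf θ ^ (-α) := by gcongr
      _ = (n:ℝ) ^ σ * (Real.sin θ ^ σ * Real.sin θ) * wf θ ^ (-α) := by ring
      _ ≤ (n:ℝ) ^ σ * wf θ ^ (σ/2 + 1/2) * wf θ ^ (-α) := by gcongr
      _ = _ := by rw [mul_assoc, ← Real.rpow_add hw]; congr 2
  have h := MeasureTheory.hasSum_integral_of_summable_integral_norm hi hs
  have e : ∫ θ in Set.Ioo 0 π, ∑' n : ℕ, Kker σ m n * (Real.sin (n * θ) * Real.sin θ * wf θ ^ (-α)) = JJ (-(α - σ)) m := by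
    unfold JJ
    refine MeasureTheory.setIntegral_congr_fun measurableSet_Ioo fun θ hθ => ?_
    have hw := wf_pos hθ
    have := ((Kker_sin h0 h1 m θ).mul_right (Real.sin θ * wf θ ^ (-α))).tsum_eq
    beta_reduce
    rw [show -(α - σ) = σ + -α by ring, Real.rpow_add hw]
    rw [show Real.sin (m * θ) * Real.sin θ * (wf θ ^ σ * wf θ ^ (-α)) = wf θ ^ σ * Real.sin (m * θ) * (Real.sin θ * wf θ ^ (-α)) by ring, ← this]
    congr 1; ext n; ring
  rw [e] at h
  rw [Riesz_eq (by linarith) (by linarith)]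
  refine my_hasSum_congr (fun n => ?_) (h.mul_left (√2 / √π))
  rw [Riesz_eq (by linarith) (by linarith), MeasureTheory.integral_const_mul]
  unfold JJ; ring

lemma W_Riesz {σ α : ℝ} (h0 : 0 < σ) (h1 : σ < 1) (ha : σ < α) (hb : α ≤ (3 + 2 * σ) / 4) (n : ℕ) (hn : 1 ≤ n) :
    Wweight σ α n * Riesz α n = Riesz (α - σ) n := by
  have hn' : (1:ℝ) ≤ n := by exact_mod_cast hn
  have g1 := (Real.Gamma_pos_of_pos (show 0 < α by linarith)).ne'
  have g2 := (Real.Gamma_pos_of_pos (show 0 < α - σ by linarith)).ne'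
  have g3 := (Real.Gamma_pos_of_pos (show 0 < 3/2 - α by linarith)).ne'
  have g4 := (Real.Gamma_pos_of_pos (show 0 < n - α + 2 by linarith)).ne'
  have g5 := (Real.Gamma_pos_of_pos (show 0 < n + α - 1 by linarith)).ne'
  have g6 := (Real.Gamma_pos_of_pos (show 0 < n - α + σ + 2 by linarith)).ne'
  unfold Wweight Riesz
  rw [show 3/2 - (α - σ) = 3/2 - α + σ by ring, show (n:ℝ) + (α - σ) - 1 = n + α - σ - 1 by ring,
    show (n:ℝ) - (α - σ) + 2 = n - α + σ + 2 by ring, Real.rpow_sub (by norm_num)]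
  have e4 : (4:ℝ) ^ σ ≠ 0 := by positivity
  have e5 : (4:ℝ) ^ α ≠ 0 := by positivity
  generalize Real.Gamma (3/2 - α + σ) = A at *
  generalize Real.Gamma (n + α - σ - 1) = A2 at *
  generalize Real.Gamma (n - α + σ + 2) = A3 at *
  generalize Real.Gamma (n + α - 1) = A4 at *
  generalize Real.Gamma (n - α + 2) = A5 at *
  generalize Real.Gamma (3/2 - α) = A6 at *
  generalize Real.Gamma (α - σ) = A7 at *
  generalize Real.Gamma α = A8 at *
  field_simp

lemma step1 {q : ℝ} (h0 : 0 < q) (h1 : q ≤ 1) (N : ℕ) :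
    q * ((N:ℝ) + 1) ^ (q - 1) ≤ ((N:ℝ) + 1) ^ q - (N:ℝ) ^ q := by
  have hp : (0:ℝ) < (N:ℝ) + 1 := by positivity
  have hs : (-1:ℝ) ≤ -(1 / ((N:ℝ) + 1)) := by
    rw [neg_le_neg_iff, div_le_one hp]; linarith [(Nat.cast_nonneg N : (0:ℝ) ≤ N)]
  have h := rpow_one_add_le_one_add_mul_self hs h0.le h1
  have e : (N:ℝ) = ((N:ℝ) + 1) * (1 + -(1 / ((N:ℝ) + 1))) := by field_simp; ring
  have e2 : (N:ℝ) ^ q = ((N:ℝ) + 1) ^ q * (1 + -(1 / ((N:ℝ) + 1))) ^ q := by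
    rw [← Real.mul_rpow hp.le (by linarith), ← e]
  rw [e2, Real.rpow_sub hp, Real.rpow_one]
  have h3 := mul_le_mul_of_nonneg_left h (Real.rpow_nonneg hp.le q)
  have : q * (((N:ℝ) + 1) ^ q / ((N:ℝ) + 1)) = ((N:ℝ) + 1) ^ q - ((N:ℝ) + 1) ^ q * (1 + q * -(1 / ((N:ℝ) + 1))) := by ring
  rw [this]; linarith

lemma step2 {q : ℝ} (h0 : 0 < q) (h1 : q ≤ 1) (N : ℕ) (hN : 1 ≤ N) :
    q * ((N:ℝ) + 1) ^ (-q - 1) ≤ (N:ℝ) ^ (-q) - ((N:ℝ) + 1) ^ (-q) := by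
  have hp : (0:ℝ) < (N:ℝ) + 1 := by positivity
  have hn : (0:ℝ) < (N:ℝ) := by exact_mod_cast hN
  have h := step1 h0 h1 N
  rw [Real.rpow_sub hp, Real.rpow_one] at h
  rw [Real.rpow_sub hp, Real.rpow_one, Real.rpow_neg hp.le, Real.rpow_neg hn.le]
  have hx : 0 < ((N:ℝ) + 1) ^ q := by positivity
  have hy : 0 < (N:ℝ) ^ q := by positivity
  have hxy : (N:ℝ) ^ q ≤ ((N:ℝ) + 1) ^ q := by gcongr; linarith
  generalize ((N:ℝ) + 1) ^ q = x at *
  generalize (N:ℝ) ^ q = y at *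
  have : y⁻¹ - x⁻¹ = (x - y) / (x * y) := by field_simp
  rw [this]
  calc q * (x⁻¹ / ((N:ℝ)+1)) = (q * (x / ((N:ℝ)+1))) / (x * x) := by field_simp
    _ ≤ (x - y) / (x * x) := by gcongr
    _ ≤ (x - y) / (x * y) := by
        apply div_le_div_of_nonneg_left (by linarith) (by positivity)
        gcongr

lemma inner_partial {σ : ℝ} (h0 : 0 < σ) (h1 : σ < 1) (m : ℕ) (hm : 1 ≤ m) (N : ℕ) :
    ∑ j ∈ Finset.range N, ((j:ℝ) + 1) ^ (-σ) * ((m:ℝ) + 1 + j) ^ (σ/2 - 1) ≤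
      (m:ℝ) ^ (σ/2 - 1) * ((min N m : ℕ) : ℝ) ^ (1 - σ) / (1 - σ)
        + (2/σ) * ((m:ℝ) ^ (-(σ/2)) - ((max N m : ℕ) : ℝ) ^ (-(σ/2))) := by
  have hm' : (0:ℝ) < m := by exact_mod_cast hm
  induction N with
  | zero => simp [Real.zero_rpow (show 1 - σ ≠ 0 by linarith)]
  | succ N ih =>
    rw [Finset.sum_range_succ]
    have hp : (0:ℝ) < (N:ℝ) + 1 := by positivity
    have hs : 0 < 1 - σ := by linarith
    by_cases h : N + 1 ≤ m
    · rw [min_eq_left h, max_eq_right h]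
      rw [min_eq_left (by omega), max_eq_right (by omega)] at ih
      have t := step1 hs (by linarith) N
      have t2 : ((m:ℝ) + 1 + N) ^ (σ/2 - 1) ≤ (m:ℝ) ^ (σ/2 - 1) :=
        Real.rpow_le_rpow_of_nonpos hm' (by linarith) (by linarith)
      have t3 : ((N:ℝ) + 1) ^ (-σ) * ((m:ℝ) + 1 + N) ^ (σ/2 - 1) ≤
          (m:ℝ) ^ (σ/2 - 1) * (((N:ℝ) + 1) ^ (1 - σ) - (N:ℝ) ^ (1 - σ)) / (1 - σ) := by
        rw [le_div_iff₀ hs]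
        calc _ ≤ ((N:ℝ) + 1) ^ (-σ) * (m:ℝ) ^ (σ/2 - 1) * (1 - σ) := by gcongr
          _ = (m:ℝ) ^ (σ/2 - 1) * ((1 - σ) * ((N:ℝ) + 1) ^ (1 - σ - 1)) := by
            rw [show 1 - σ - 1 = -σ by ring]; ring
          _ ≤ _ := by gcongr
      rw [mul_sub, sub_div] at t3
      push_cast
      linarith
    · rw [min_eq_right (by omega), max_eq_left (by omega)]
      rw [min_eq_right (by omega), max_eq_left (by omega)] at ih
      have t := step2 (q := σ/2) (by linarith) (by linarith) N (by omega)
      have t2 : ((m:ℝ) + 1 + N) ^ (σ/2 - 1) ≤ ((N:ℝ) + 1) ^ (σ/2 - 1) :=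
        Real.rpow_le_rpow_of_nonpos hp (by linarith) (by linarith)
      have t3 : ((N:ℝ) + 1) ^ (-σ) * ((m:ℝ) + 1 + N) ^ (σ/2 - 1) ≤
          (2/σ) * ((N:ℝ) ^ (-(σ/2)) - ((N:ℝ) + 1) ^ (-(σ/2))) := by
        calc _ ≤ ((N:ℝ) + 1) ^ (-σ) * ((N:ℝ) + 1) ^ (σ/2 - 1) := by gcongr
          _ = (2/σ) * ((σ/2) * ((N:ℝ) + 1) ^ (-(σ/2) - 1)) := by
            rw [← Real.rpow_add hp, show -σ + (σ/2 - 1) = -(σ/2) - 1 by ring]; field_simp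
          _ ≤ _ := by gcongr
      push_cast
      linarith

lemma inner_sumb {σ : ℝ} (h0 : 0 < σ) (h1 : σ < 1) (m : ℕ) (hm : 1 ≤ m) (N : ℕ) :
    ∑ j ∈ Finset.range N, ((j:ℝ) + 1) ^ (-σ) * ((m:ℝ) + 1 + j) ^ (σ/2 - 1) ≤
      (1 / (1 - σ) + 2/σ) * (m:ℝ) ^ (-(σ/2)) := by
  have hm' : (0:ℝ) < m := by exact_mod_cast hm
  have hs : 0 < 1 - σ := by linarith
  refine (inner_partial h0 h1 m hm N).trans ?_
  have a1 : (m:ℝ) ^ (σ/2 - 1) * ((min N m : ℕ) : ℝ) ^ (1 - σ) / (1 - σ) ≤ (1 / (1 - σ)) * (m:ℝ) ^ (-(σ/2)) := by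
    calc _ ≤ (m:ℝ) ^ (σ/2 - 1) * (m : ℝ) ^ (1 - σ) / (1 - σ) := by
          gcongr; exact min_le_right _ _
      _ = _ := by rw [← Real.rpow_add hm', show σ/2 - 1 + (1 - σ) = -(σ/2) by ring]; ring
  have a2 : (2/σ) * ((m:ℝ) ^ (-(σ/2)) - ((max N m : ℕ) : ℝ) ^ (-(σ/2))) ≤ (2/σ) * (m:ℝ) ^ (-(σ/2)) := by
    gcongr
    have : 0 ≤ ((max N m : ℕ) : ℝ) ^ (-(σ/2)) := by positivity
    linarith
  linarith

lemma sumbound {σ : ℝ} (h0 : 0 < σ) (h1 : σ < 1) {A : ℝ} (hA : 0 ≤ A) (M : ℕ) :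
    ∃ S, S ≤ A * (1 / (1 - σ) + 2/σ) * (1 + Real.log M) ∧
      HasSum (fun p : ℕ × ℕ => if 1 ≤ p.1 ∧ p.1 < p.2 ∧ p.1 ≤ M then
        A * (p.1:ℝ) ^ (σ/2 - 1) * (((p.2:ℝ) - p.1) ^ (-σ) * (p.2:ℝ) ^ (σ/2 - 1)) else 0) S := by
  set B := 1 / (1 - σ) + 2/σ with hB
  have hs : 0 < 1 - σ := by linarith
  have hBpos : 0 < B := by positivity
  set h : ℕ × ℕ → ℝ := fun p : ℕ × ℕ => if 1 ≤ p.1 ∧ p.1 < p.2 ∧ p.1 ≤ M then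
        A * (p.1:ℝ) ^ (σ/2 - 1) * (((p.2:ℝ) - p.1) ^ (-σ) * (p.2:ℝ) ^ (σ/2 - 1)) else 0 with hh
  have hnn : 0 ≤ h := by
    intro p
    simp only [hh]
    split_ifs with hc
    · have : (0:ℝ) ≤ (p.2:ℝ) - p.1 := by
        have : (p.1:ℝ) ≤ p.2 := by exact_mod_cast hc.2.1.le
        linarith
      simp only [Pi.zero_apply]
      positivity
    · simp
  have row : ∀ m : ℕ, Summable (fun n => h (m, n)) ∧ ∑' n, h (m, n) ≤ if m ∈ Finset.Icc 1 M then A * B * (m:ℝ)⁻¹ else 0 := by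
    intro m
    by_cases hm : m ∈ Finset.Icc 1 M
    · rw [if_pos hm]
      rw [Finset.mem_Icc] at hm
      have hm' : (0:ℝ) < m := by exact_mod_cast hm.1
      have hinj : Function.Injective (fun j : ℕ => m + 1 + j) := add_right_injective _
      have hz : ∀ n ∉ Set.range (fun j : ℕ => m + 1 + j), h (m, n) = 0 := by
        intro n hn
        simp only [hh]
        rw [if_neg]
        rintro ⟨_, h2, _⟩
        exact hn ⟨n - (m + 1), by dsimp only at h2 ⊢; omega⟩
      have hcomp : ∀ j : ℕ, h (m, m + 1 + j) = A * (m:ℝ) ^ (σ/2 - 1) * (((j:ℝ) + 1) ^ (-σ) * ((m:ℝ) + 1 + j) ^ (σ/2 - 1)) := by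
        intro j
        simp only [hh]
        rw [if_pos ⟨hm.1, by omega, hm.2⟩]
        push_cast
        rw [show (m:ℝ) + 1 + j - m = j + 1 by ring]
      have n2 : ∀ j : ℕ, 0 ≤ ((j:ℝ) + 1) ^ (-σ) * ((m:ℝ) + 1 + j) ^ (σ/2 - 1) := fun j => by positivity
      have s2 := summable_of_sum_range_le n2 (inner_sumb h0 h1 m hm.1)
      have t2 := Real.tsum_le_of_sum_range_le n2 (inner_sumb h0 h1 m hm.1)
      have hs2 := (s2.hasSum.mul_left (A * (m:ℝ) ^ (σ/2 - 1)))
      have hs3 : HasSum ((fun n => h (m, n)) ∘ (fun j : ℕ => m + 1 + j)) _ := my_hasSum_congr hcomp hs2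
      rw [hinj.hasSum_iff hz] at hs3
      refine ⟨hs3.summable, ?_⟩
      rw [hs3.tsum_eq]
      calc _ ≤ A * (m:ℝ) ^ (σ/2 - 1) * (B * (m:ℝ) ^ (-(σ/2))) := by gcongr
        _ = A * B * ((m:ℝ) ^ (σ/2 - 1) * (m:ℝ) ^ (-(σ/2))) := by ring
        _ = _ := by rw [← Real.rpow_add hm', show σ/2 - 1 + -(σ/2) = -1 by ring, Real.rpow_neg_one]
    · rw [if_neg hm]
      have : (fun n => h (m, n)) = fun _ => 0 := by
        ext n
        simp only [hh]
        rw [if_neg]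
        rintro ⟨a, _, c⟩
        exact hm (Finset.mem_Icc.2 ⟨a, c⟩)
      rw [this]; simp [summable_zero]
  have hz : ∀ m ∉ Finset.Icc 1 M, ∑' n, h (m, n) = 0 := by
    intro m hm
    have := (row m).2
    rw [if_neg hm] at this
    exact le_antisymm this (tsum_nonneg fun n => hnn _)
  have hsum : Summable h := (summable_prod_of_nonneg hnn).2
    ⟨fun m => (row m).1, summable_of_ne_finset_zero hz⟩
  refine ⟨∑' p, h p, ?_, hsum.hasSum⟩
  rw [hsum.tsum_prod, tsum_eq_sum hz]
  calc _ ≤ ∑ m ∈ Finset.Icc 1 M, A * B * (m:ℝ)⁻¹ := by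
        refine Finset.sum_le_sum fun m hm => ?_
        have := (row m).2
        rwa [if_pos hm] at this
    _ = A * B * (harmonic M : ℝ) := by
        rw [← Finset.mul_sum, harmonic_eq_sum_Icc]; push_cast; rfl
    _ ≤ _ := by
        gcongr; exact harmonic_le_one_add_log M

lemma gs_identity {K : ℕ → ℕ → ℝ} (hK : ∀ m n, K m n = K n m) {V R φ : ℕ → ℝ} {N : ℕ}
    (hφ : ∀ n, N ≤ n → φ n = 0) (hs : ∀ m, HasSum (fun n => K m n * V n) (R m)) :
    HasSum (fun p : ℕ × ℕ => K p.1 p.2 * V p.1 * V p.2 * (φ p.1 - φ p.2) ^ 2)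
      (2 * (∑' m, R m * V m * φ m ^ 2 - ∑' m, ∑' n, K m n * (φ m * V m) * (φ n * V n))) := by
  set b : ℕ × ℕ → ℝ := fun p => K p.1 p.2 * V p.1 * V p.2 * φ p.1 * (φ p.1 - φ p.2) with hb
  have hz : ∀ m ∉ Finset.range N, φ m = 0 := fun m hm => hφ m (by simpa using hm)
  have hr : ∀ m, HasSum (fun n => K m n * (φ m * V m) * (φ n * V n)) (∑' n, K m n * (φ m * V m) * (φ n * V n)) := by
    intro m
    apply Summable.hasSum
    refine summable_of_ne_finset_zero (s := Finset.range N) fun n hn => ?_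
    rw [hz n hn]; ring
  have row : ∀ m, HasSum (fun n => b (m, n)) (R m * V m * φ m ^ 2 - ∑' n, K m n * (φ m * V m) * (φ n * V n)) := by
    intro m
    have := ((hs m).mul_right (V m * φ m ^ 2)).sub (hr m)
    rw [← mul_assoc] at this
    refine my_hasSum_congr (fun n => ?_) this
    simp only [hb]; ring
  have bz : ∀ m ∉ Finset.range N, ∀ n, b (m, n) = 0 := by
    intro m hm n; simp only [hb, hz m hm]; ring
  have bs : Summable b := by
    apply Summable.of_norm
    refine (summable_prod_of_nonneg (fun p => norm_nonneg _)).2 ⟨fun m => (row m).summable.norm, ?_⟩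
    refine summable_of_ne_finset_zero (s := Finset.range N) fun m hm => ?_
    simp [bz m hm]
  have bt : ∑' p, b p = ∑' m, R m * V m * φ m ^ 2 - ∑' m, ∑' n, K m n * (φ m * V m) * (φ n * V n) := by
    rw [bs.tsum_prod]
    simp only [fun m => (row m).tsum_eq]
    rw [Summable.tsum_sub]
    · refine summable_of_ne_finset_zero (s := Finset.range N) fun m hm => ?_
      rw [hz m hm]; ring
    · refine summable_of_ne_finset_zero (s := Finset.range N) fun m hm => ?_
      simp [hz m hm]
  have h1 : HasSum b _ := bs.hasSum
  have h2 : HasSum (b ∘ (Equiv.prodComm ℕ ℕ)) _ := (Equiv.hasSum_iff _).2 h1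
  have h3 := h1.add h2
  rw [← two_mul, bt] at h3
  refine my_hasSum_congr (fun p => ?_) h3
  simp only [hb, Function.comp, Equiv.prodComm_apply, Prod.fst_swap, Prod.snd_swap]
  rw [hK p.2 p.1]; ring

lemma Riesz_nonneg {α : ℝ} (h0 : 0 < α) (h1 : α < 3/2) (n : ℕ) : 0 ≤ Riesz α n := by
  rcases Nat.eq_zero_or_pos n with h | h
  · subst h; simp [Riesz]
  · have hn' : (1:ℝ) ≤ n := by exact_mod_cast h
    have g1 := Real.Gamma_pos_of_pos h0
    have g3 := Real.Gamma_pos_of_pos (show 0 < 3/2 - α by linarith)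
    have g4 := Real.Gamma_pos_of_pos (show 0 < n - α + 2 by linarith)
    have g5 := Real.Gamma_pos_of_pos (show 0 < n + α - 1 by linarith)
    unfold Riesz
    positivity

lemma Riesz_bound {α τ : ℝ} (h0 : 0 < α) (h1 : α < 3/2) (ht : 2 * α - 2 ≤ τ) :
    ∃ C, 0 < C ∧ ∀ n : ℕ, 1 ≤ n → Riesz α n ≤ C * (n:ℝ) ^ τ := by
  obtain ⟨C, hC, h⟩ := gamma_ratio (x := α - 1) (y := 2 - α) (by linarith) (by linarith)
  have g1 := Real.Gamma_pos_of_pos h0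
  have g3 := Real.Gamma_pos_of_pos (show 0 < 3/2 - α by linarith)
  set D := 4 / (4 ^ α * √2) * Real.Gamma (3/2 - α) / Real.Gamma α with hD
  have hDp : 0 < D := by positivity
  refine ⟨D * C, by positivity, fun n hn => ?_⟩
  have hn' : (1:ℝ) ≤ n := by exact_mod_cast hn
  have e : Riesz α n = D * n * (Real.Gamma (n + (α - 1)) / Real.Gamma (n + (2 - α))) := by
    unfold Riesz
    rw [show (n:ℝ) + (α - 1) = n + α - 1 by ring, show (n:ℝ) + (2 - α) = n - α + 2 by ring, hD]
    have g4 := Real.Gamma_pos_of_pos (show 0 < n - α + 2 by linarith)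
    field_simp
  rw [e]
  calc _ ≤ D * n * (C * (n:ℝ) ^ (α - 1 - (2 - α))) := by gcongr; exact h n hn
    _ = D * C * ((n:ℝ) ^ (1:ℝ) * (n:ℝ) ^ (α - 1 - (2 - α))) := by rw [Real.rpow_one]; ring
    _ = D * C * (n:ℝ) ^ (2 * α - 2) := by
        rw [← Real.rpow_add (by linarith), show 1 + (α - 1 - (2 - α)) = 2 * α - 2 by ring]
    _ ≤ _ := by gcongr

lemma Kker_symm {σ : ℝ} (h0 : 0 < σ) (h1 : σ < 1) (m n : ℕ) : Kker σ m n = Kker σ n m := by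
  rw [Kker_eq h0 h1, Kker_eq h0 h1, ← bco_neg]
  congr 2 <;> ring

lemma Kker_bound {σ : ℝ} (h0 : 0 < σ) (h1 : σ < 1) :
    ∃ C, 0 < C ∧ ∀ m n : ℕ, m < n → |Kker σ m n| ≤ C * ((n:ℝ) - m) ^ (-(1 + 2 * σ)) := by
  obtain ⟨C, hC, h⟩ := bco_bound h0 h1
  refine ⟨2 * C, by positivity, fun m n hmn => ?_⟩
  rw [Kker_eq h0 h1]
  have e1 : bco σ ((m:ℤ) - n) = bco σ ((n - m : ℕ) : ℤ) := by
    rw [← bco_neg]; congr 1; push_cast [Nat.cast_sub hmn.le]; ring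
  have e2 : bco σ ((m:ℤ) + n) = bco σ ((m + n : ℕ) : ℤ) := by push_cast; rfl
  rw [e1, e2]
  have a1 := h (n - m) (by omega)
  have a2 := h (m + n) (by omega)
  rw [Nat.cast_sub (R := ℝ) hmn.le] at a1
  have hd : (0:ℝ) < (n:ℝ) - m := by
    have : (m:ℝ) < n := by exact_mod_cast hmn
    linarith
  have a3 : ((m + n : ℕ) : ℝ) ^ (-(1 + 2 * σ)) ≤ ((n:ℝ) - m) ^ (-(1 + 2 * σ)) := by
    apply Real.rpow_le_rpow_of_nonpos hd _ (by linarith)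
    push_cast
    linarith [(Nat.cast_nonneg m : (0:ℝ) ≤ m)]
  calc _ ≤ |bco σ ((n - m : ℕ) : ℤ)| + |bco σ ((m + n : ℕ) : ℤ)| := abs_sub _ _
    _ ≤ C * ((n:ℝ) - m) ^ (-(1 + 2 * σ)) + C * ((n:ℝ) - m) ^ (-(1 + 2 * σ)) := by
        refine add_le_add a1 (a2.trans ?_)
        gcongr
    _ = _ := by ring

noncomputable def phik (k n : ℕ) : ℝ :=
  if n ≤ k then (1 : ℝ)
       else if n ≤ k ^ 2 then 2 - Real.log (n : ℝ) / Real.log (k : ℝ)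
       else 0

lemma phik_zero {k n : ℕ} (hk : 2 ≤ k) (h : k ^ 2 < n) : phik k n = 0 := by
  unfold phik
  rw [if_neg (by nlinarith), if_neg (by omega)]

lemma phik_range {k : ℕ} (hk : 2 ≤ k) (n : ℕ) : 0 ≤ phik k n ∧ phik k n ≤ 1 := by
  have hk' : (2:ℝ) ≤ k := by exact_mod_cast hk
  have hL : 0 < Real.log k := Real.log_pos (by linarith)
  unfold phik
  split_ifs with h1 h2
  · simp
  · have hn : (k:ℝ) ≤ n := by exact_mod_cast (not_le.1 h1).le
    have h2' : (n:ℝ) ≤ (k:ℝ) ^ 2 := by exact_mod_cast h2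
    have a1 : Real.log k ≤ Real.log n := Real.log_le_log (by linarith) hn
    have a2 : Real.log n ≤ 2 * Real.log k := by
      have := Real.log_le_log (by linarith) h2'
      rwa [Real.log_pow] at this
    have b1 : 1 ≤ Real.log n / Real.log k := by rwa [le_div_iff₀ hL, one_mul]
    have b2 : Real.log n / Real.log k ≤ 2 := by rwa [div_le_iff₀ hL]
    constructor <;> linarith
  · simp

lemma phik_diff {k : ℕ} (hk : 2 ≤ k) {m n : ℕ} (hm : 1 ≤ m) (hmn : m < n) :
    0 ≤ phik k m - phik k n ∧ phik k m - phik k n ≤ (Real.log n - Real.log m) / Real.log k := by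
  have hk' : (2:ℝ) ≤ k := by exact_mod_cast hk
  have hL : 0 < Real.log k := Real.log_pos (by linarith)
  have hm' : (1:ℝ) ≤ m := by exact_mod_cast hm
  have hmn' : (m:ℝ) < n := by exact_mod_cast hmn
  have hl : Real.log m ≤ Real.log n := Real.log_le_log (by linarith) hmn'.le
  have c1 : ∀ j : ℕ, 1 ≤ j → j ≤ k → Real.log j / Real.log k ≤ 1 := by
    intro j hj h
    rw [div_le_one hL]
    exact Real.log_le_log (by exact_mod_cast hj) (by exact_mod_cast h)
  have c2 : ∀ j : ℕ, k ≤ j → 1 ≤ Real.log j / Real.log k := by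
    intro j h
    rw [one_le_div hL]
    exact Real.log_le_log (by linarith) (by exact_mod_cast h)
  have c3 : ∀ j : ℕ, k ^ 2 ≤ j → 2 ≤ Real.log j / Real.log k := by
    intro j h
    rw [le_div_iff₀ hL]
    have h' : (k:ℝ) ^ 2 ≤ j := by exact_mod_cast h
    have := Real.log_le_log (by positivity) h'
    rwa [Real.log_pow] at this
  have c4 : ∀ j : ℕ, 1 ≤ j → j ≤ k ^ 2 → Real.log j / Real.log k ≤ 2 := by
    intro j hj h
    rw [div_le_iff₀ hL]
    have h' : (j:ℝ) ≤ (k:ℝ) ^ 2 := by exact_mod_cast h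
    have := Real.log_le_log (by exact_mod_cast hj) h'
    rwa [Real.log_pow] at this
  have hl2 : Real.log m / Real.log k ≤ Real.log n / Real.log k := by gcongr
  have hkk : k ≤ k ^ 2 := by nlinarith
  rw [sub_div]
  unfold phik
  by_cases m1 : m ≤ k
  · rw [if_pos m1]
    have := c1 m hm m1
    by_cases n1 : n ≤ k
    · rw [if_pos n1]; constructor <;> linarith
    · rw [if_neg n1]
      have := c2 n (by omega)
      by_cases n2 : n ≤ k ^ 2
      · rw [if_pos n2]; constructor <;> linarith
      · rw [if_neg n2]
        have := c3 n (by omega)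
        constructor <;> linarith
  · rw [if_neg m1, if_neg (show ¬ n ≤ k by omega)]
    by_cases m2 : m ≤ k ^ 2
    · rw [if_pos m2]
      have := c4 m hm m2
      by_cases n2 : n ≤ k ^ 2
      · rw [if_pos n2]; constructor <;> linarith
      · rw [if_neg n2]
        have := c3 n (by omega)
        constructor <;> linarith
    · rw [if_neg m2, if_neg (show ¬ n ≤ k ^ 2 by omega)]
      constructor <;> linarith

lemma log_diff {x y : ℝ} (hx : 0 < x) (hxy : x ≤ y) :
    Real.log y - Real.log x ≤ (y - x) * (x ^ (-(1/2) : ℝ) * y ^ (-(1/2) : ℝ)) := by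
  have hy : 0 < y := by linarith
  have hl : Real.log x ≤ Real.log y := Real.log_le_log hx hxy
  have h := Real.self_le_sinh_iff.2 (show 0 ≤ (Real.log y - Real.log x) / 2 by linarith)
  rw [Real.sinh_eq] at h
  have e1 : Real.exp ((Real.log y - Real.log x) / 2) = √y / √x := by
    rw [Real.sqrt_eq_rpow, Real.sqrt_eq_rpow, Real.rpow_def_of_pos hx, Real.rpow_def_of_pos hy, ← Real.exp_sub]
    congr 1; ring
  rw [Real.exp_neg, e1] at h
  have sx : 0 < √x := Real.sqrt_pos.2 hx
  have sy : 0 < √y := Real.sqrt_pos.2 hy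
  have : (y - x) * (x ^ (-(1/2) : ℝ) * y ^ (-(1/2) : ℝ)) = √y / √x - (√y / √x)⁻¹ := by
    rw [Real.rpow_neg hx.le, Real.rpow_neg hy.le, ← Real.sqrt_eq_rpow, ← Real.sqrt_eq_rpow]
    nth_rewrite 1 [← Real.sq_sqrt hx.le, ← Real.sq_sqrt hy.le]
    field_simp
  rw [this]; linarith

lemma offdiag {σ α : ℝ} (h0 : 0 < σ) (h1 : σ < 1) (ha : σ < α) (hb : α ≤ (3 + 2 * σ) / 4) :
    ∃ C, 0 < C ∧ ∀ k : ℕ, 2 ≤ k → ∀ m n : ℕ, 1 ≤ m → m < n →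
      |Kker σ m n| * Riesz α m * Riesz α n * (phik k m - phik k n) ^ 2 ≤
        C / (Real.log k) ^ (1 + σ) * (m:ℝ) ^ (σ/2 - 1) * (((n:ℝ) - m) ^ (-σ) * (n:ℝ) ^ (σ/2 - 1)) := by
  obtain ⟨C1, hC1, b1⟩ := Kker_bound h0 h1
  obtain ⟨C2, hC2, b2⟩ := Riesz_bound (α := α) (τ := σ - 1/2) (by linarith) (by linarith) (by linarith)
  refine ⟨C1 * C2 * C2, by positivity, fun k hk m n hm hmn => ?_⟩
  have hk' : (2:ℝ) ≤ k := by exact_mod_cast hk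
  have hL : 0 < Real.log k := Real.log_pos (by linarith)
  have hm' : (0:ℝ) < m := by exact_mod_cast hm
  have hmn' : (m:ℝ) < n := by exact_mod_cast hmn
  have hn' : (0:ℝ) < n := by linarith
  have hd : (0:ℝ) < (n:ℝ) - m := by linarith
  obtain ⟨p0, p1⟩ := phik_diff hk hm hmn
  have p2 : phik k m - phik k n ≤ 1 := by linarith [(phik_range hk m).2, (phik_range hk n).1]
  have r1 := Riesz_nonneg (α := α) (by linarith) (by linarith) m
  have r2 := Riesz_nonneg (α := α) (by linarith) (by linarith) n
  have q : (phik k m - phik k n) ^ 2 ≤ (((n:ℝ) - m) * ((m:ℝ) ^ (-(1/2) : ℝ) * (n:ℝ) ^ (-(1/2) : ℝ)) / Real.log k) ^ (1 + σ) := by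
    calc (phik k m - phik k n) ^ 2 = (phik k m - phik k n) ^ (2:ℝ) := (Real.rpow_two _).symm
      _ ≤ (phik k m - phik k n) ^ (1 + σ) :=
        Real.rpow_le_rpow_of_exponent_ge' p0 p2 (by linarith) (by linarith)
      _ ≤ _ := by
        apply Real.rpow_le_rpow p0 (p1.trans _) (by linarith)
        gcongr
        exact log_diff hm' hmn'.le
  have q2 : (((n:ℝ) - m) * ((m:ℝ) ^ (-(1/2) : ℝ) * (n:ℝ) ^ (-(1/2) : ℝ)) / Real.log k) ^ (1 + σ) =
      ((n:ℝ) - m) ^ (1 + σ) * ((m:ℝ) ^ (-(1 + σ)/2) * (n:ℝ) ^ (-(1 + σ)/2)) / (Real.log k) ^ (1 + σ) := by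
    rw [Real.div_rpow (by positivity) hL.le, Real.mul_rpow hd.le (by positivity),
      Real.mul_rpow (by positivity) (by positivity), ← Real.rpow_mul hm'.le, ← Real.rpow_mul hn'.le]
    rw [show -(1/2) * (1 + σ) = -(1 + σ)/2 by ring]
  rw [q2] at q
  calc _ ≤ (C1 * ((n:ℝ) - m) ^ (-(1 + 2 * σ))) * (C2 * (m:ℝ) ^ (σ - 1/2)) * (C2 * (n:ℝ) ^ (σ - 1/2)) *
        (((n:ℝ) - m) ^ (1 + σ) * ((m:ℝ) ^ (-(1 + σ)/2) * (n:ℝ) ^ (-(1 + σ)/2)) / (Real.log k) ^ (1 + σ)) := by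
        gcongr
        · exact b1 m n hmn
        · exact b2 m hm
        · exact b2 n (by omega)
    _ = C1 * C2 * C2 / (Real.log k) ^ (1 + σ) * ((m:ℝ) ^ (σ - 1/2) * (m:ℝ) ^ (-(1 + σ)/2)) *
        ((((n:ℝ) - m) ^ (-(1 + 2 * σ)) * ((n:ℝ) - m) ^ (1 + σ)) * ((n:ℝ) ^ (σ - 1/2) * (n:ℝ) ^ (-(1 + σ)/2))) := by ring
    _ = _ := by
        rw [← Real.rpow_add hm', ← Real.rpow_add hd, ← Real.rpow_add hn',
          show σ - 1/2 + -(1 + σ)/2 = σ/2 - 1 by ring, show -(1 + 2 * σ) + (1 + σ) = -σ by ring]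

lemma main_bound {σ α : ℝ} (h0 : 0 < σ) (h1 : σ < 1) (ha : σ < α) (hb : α ≤ (3 + 2 * σ) / 4) :
    ∃ C, 0 < C ∧ ∀ k : ℕ, 2 ≤ k →
      |Qform σ (fun n => phik k n * Riesz α n) - ∑' n : ℕ, Wweight σ α n * (phik k n * Riesz α n) ^ 2| ≤
        C / (Real.log k) ^ (1 + σ) * (1 + 2 * Real.log k) := by
  obtain ⟨C, hC, ho⟩ := offdiag h0 h1 ha hb
  have hs : 0 < 1 - σ := by linarith
  refine ⟨C * (1 / (1 - σ) + 2/σ), by positivity, fun k hk => ?_⟩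
  have hk' : (2:ℝ) ≤ k := by exact_mod_cast hk
  have hL : 0 < Real.log k := Real.log_pos (by linarith)
  have key := gs_identity (K := Kker σ) (Kker_symm h0 h1) (V := Riesz α) (φ := phik k) (N := k ^ 2 + 1)
    (fun n hn => phik_zero hk (by omega)) (ground_state h0 h1 ha hb)
  have hW : ∑' n : ℕ, Wweight σ α n * (phik k n * Riesz α n) ^ 2 =
      ∑' m, Riesz (α - σ) m * Riesz α m * phik k m ^ 2 := by
    congr 1; ext n
    rcases Nat.eq_zero_or_pos n with h | h
    · subst h; simp [Riesz]
    · rw [← W_Riesz h0 h1 ha hb n h]; ring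
  have hQ : Qform σ (fun n => phik k n * Riesz α n) =
      ∑' m, ∑' n, Kker σ m n * (phik k m * Riesz α m) * (phik k n * Riesz α n) := rfl
  rw [hW, hQ]
  set X := ∑' m, Riesz (α - σ) m * Riesz α m * phik k m ^ 2
  set Y := ∑' m, ∑' n, Kker σ m n * (phik k m * Riesz α m) * (phik k n * Riesz α n)
  obtain ⟨S, hS, hsum⟩ := sumbound h0 h1 (A := C / (Real.log k) ^ (1 + σ)) (by positivity) (k ^ 2)
  have hsw := (Equiv.hasSum_iff (Equiv.prodComm ℕ ℕ)).2 hsum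
  have htot := hsum.add hsw
  have rn := Riesz_nonneg (α := α) (by linarith) (by linarith)
  have fin_step := fun hle => tsum_of_norm_bounded (f := fun p : ℕ × ℕ => Kker σ p.1 p.2 * Riesz α p.1 * Riesz α p.2 * (phik k p.1 - phik k p.2) ^ 2) htot hle
  suffices hle : _ by
    have := fin_step hle
    rw [key.tsum_eq, Real.norm_eq_abs, abs_mul, abs_of_pos (by norm_num : (0:ℝ) < 2)] at this
    rw [abs_sub_comm]
    push_cast [Real.log_pow] at hS
    have e : C * (1 / (1 - σ) + 2/σ) / (Real.log k) ^ (1 + σ) * (1 + 2 * Real.log k)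
       = C / (Real.log k) ^ (1 + σ) * (1 / (1 - σ) + 2/σ) * (1 + 2 * Real.log k) := by ring
    rw [e]
    linarith
  have half : ∀ m n : ℕ, m < n → ‖Kker σ m n * Riesz α m * Riesz α n * (phik k m - phik k n) ^ 2‖ ≤
      if 1 ≤ m ∧ m < n ∧ m ≤ k ^ 2 then
      C / (Real.log k) ^ (1 + σ) * (m:ℝ) ^ (σ/2 - 1) * (((n:ℝ) - m) ^ (-σ) * (n:ℝ) ^ (σ/2 - 1)) else 0 := by
    intro m n hmn
    split_ifs with hc
    · rw [Real.norm_eq_abs, abs_mul, abs_mul, abs_mul, abs_of_nonneg (rn m), abs_of_nonneg (rn n), abs_of_nonneg (sq_nonneg (phik k m - phik k n))]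
      exact ho k hk m n hc.1 hmn
    · rcases Nat.eq_zero_or_pos m with h | h
      · subst h; simp [Riesz]
      · have : k ^ 2 < m := by
          by_contra h'
          exact hc ⟨h, hmn, not_lt.1 h'⟩
        rw [phik_zero hk this, phik_zero hk (this.trans hmn)]; simp
  rintro ⟨m, n⟩
  change ‖Kker σ m n * Riesz α m * Riesz α n * (phik k m - phik k n) ^ 2‖ ≤
    (if 1 ≤ m ∧ m < n ∧ m ≤ k ^ 2 then
      C / (Real.log k) ^ (1 + σ) * (m:ℝ) ^ (σ/2 - 1) * (((n:ℝ) - m) ^ (-σ) * (n:ℝ) ^ (σ/2 - 1)) else 0) +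
    (if 1 ≤ n ∧ n < m ∧ n ≤ k ^ 2 then
      C / (Real.log k) ^ (1 + σ) * (n:ℝ) ^ (σ/2 - 1) * (((m:ℝ) - n) ^ (-σ) * (m:ℝ) ^ (σ/2 - 1)) else 0)
  rcases lt_trichotomy m n with h | h | h
  · have := half m n h
    rw [if_neg (show ¬ (1 ≤ n ∧ n < m ∧ n ≤ k ^ 2) by omega), add_zero]
    exact this
  · subst h; simp
  · have := half n m h
    rw [if_neg (show ¬ (1 ≤ m ∧ m < n ∧ m ≤ k ^ 2) by omega), zero_add]
    refine le_trans (le_of_eq ?_) this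
    rw [Kker_symm h0 h1 m n]; congr 1; ring

lemma lim_aux {σ : ℝ} (h0 : 0 < σ) (C : ℝ) :
    Tendsto (fun k : ℕ => C / (Real.log k) ^ (1 + σ) * (1 + 2 * Real.log k)) atTop (nhds 0) := by
  have hlog : Tendsto (fun k : ℕ => Real.log k) atTop atTop :=
    Real.tendsto_log_atTop.comp tendsto_natCast_atTop_atTop
  have t1 : Tendsto (fun k : ℕ => (Real.log k) ^ (-(1 + σ))) atTop (nhds 0) :=
    (tendsto_rpow_neg_atTop (by linarith)).comp hlog
  have t2 : Tendsto (fun k : ℕ => (Real.log k) ^ (-σ)) atTop (nhds 0) :=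
    (tendsto_rpow_neg_atTop h0).comp hlog
  have t3 := (t1.const_mul C).add (t2.const_mul (2 * C))
  simp only [mul_zero, add_zero] at t3
  refine t3.congr' ?_
  filter_upwards [hlog.eventually_gt_atTop 0] with k hk
  have : (Real.log k) ^ (-σ) = (Real.log k) ^ (-(1 + σ)) * Real.log k := by
    rw [show -σ = -(1 + σ) + 1 by ring, Real.rpow_add hk, Real.rpow_one]
  rw [this, Real.rpow_neg hk.le]; ring

/-- The log-cutoff functions multiplied by `I_α` form a null-sequence for
`(-Δ_ℕ)^σ - W_{α,σ}` when `σ ∈ (0,1)` and `σ < α ≤ (3+2σ)/4`. -/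
theorem stmt_8 (σ α : ℝ) (hσ0 : 0 < σ) (hσ1 : σ < 1)
    (hα1 : σ < α) (hα2 : α ≤ (3 + 2 * σ) / 4)
    (ψ : ℕ → ℕ → ℝ)
    (hψ : ψ = fun (k n : ℕ) =>
      (if n ≤ k then (1 : ℝ)
       else if n ≤ k ^ 2 then 2 - Real.log (n : ℝ) / Real.log (k : ℝ)
       else 0) * Riesz α n) :
    (∀ k : ℕ, 2 ≤ k →
        (∀ n, 0 ≤ ψ k n) ∧ (Function.support (ψ k)).Finite ∧ ψ k 1 = Riesz α 1) ∧
    Filter.Tendsto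
      (fun k : ℕ => Qform σ (ψ k) - ∑' n : ℕ, Wweight σ α n * (ψ k n) ^ 2)
      Filter.atTop (nhds 0) := by
  have hp : ∀ k n, ψ k n = phik k n * Riesz α n := by intro k n; rw [hψ]; rfl
  have rn := Riesz_nonneg (α := α) (by linarith) (by linarith)
  refine ⟨fun k hk => ⟨fun n => ?_, ?_, ?_⟩, ?_⟩
  · rw [hp]; exact mul_nonneg (phik_range hk n).1 (rn n)
  · refine (Set.finite_Iic (k ^ 2)).subset fun n hn => ?_
    by_contra h
    apply hn
    rw [hp, phik_zero hk (not_le.1 h), zero_mul]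
  · rw [hp, phik, if_pos (by omega), one_mul]
  · obtain ⟨C, hC, h⟩ := main_bound hσ0 hσ1 hα1 hα2
    refine squeeze_zero_norm' ?_ (lim_aux hσ0 C)
    filter_upwards [eventually_ge_atTop 2] with k hk
    have e : ψ k = fun n => phik k n * Riesz α n := funext (hp k)
    rw [e]
    exact h k hk
end

section
/- Let α ∈ (1, 5/4]. Then −Δ_ℕ − W_{α,1} is critical on ℕ: the inequality Q(f) := Σ_{n≥0}(f(n+1)−f(n))² ≥ Σ_{n≥1} W_{α,1}(n)·f(n)² holds for every finitely supported f : ℕ → ℝ (with the convention f(0) = 0), while for every nonzero W̃ : ℕ → [0,∞) there exists a finitely supported f (f(0)=0) with Q(f) < Σ_{n≥1}(W_{α,1}(n)+W̃(n))·f(n)². -/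
open Real Filter

/-- The quadratic form of the Dirichlet Laplacian `-Δ_ℕ` on the discrete half-line
(with the convention `f 0 = 0`). -/
noncomputable def QDir (f : ℕ → ℝ) : ℝ := ∑' n : ℕ, (f (n + 1) - f n) ^ 2


noncomputable def uG (a : ℝ) : ℕ → ℝ
  | 0 => 0
  | 1 => 1
  | (n+2) => uG a (n+1) * ((n+2)*(n+1+a)/((n+1)*(n+2-a)))

lemma uG_pos (a : ℝ) (h0 : 0 < a) (h1 : a ≤ 1/4) (n : ℕ) : 0 < uG a (n+1) := by
  induction n with
  | zero => simp [uG]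
  | succ n ih =>
    rw [uG]
    have : (0:ℝ) ≤ n := n.cast_nonneg
    have : (0:ℝ) < n+2-a := by linarith
    positivity

lemma uG_nonneg (a : ℝ) (h0 : 0 < a) (h1 : a ≤ 1/4) (n : ℕ) : 0 ≤ uG a n := by
  cases n with
  | zero => simp [uG]
  | succ n => exact (uG_pos a h0 h1 n).le

lemma uG_sq (a : ℝ) (h0 : 0 < a) (h1 : a ≤ 1/4) (n : ℕ) : uG a (n+1) ^ 2 ≤ 2*n+1 := by
  induction n with
  | zero => simp [uG]
  | succ n ih =>
    rw [uG, mul_pow]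
    have hn : (0:ℝ) ≤ n := n.cast_nonneg
    have hp : (0:ℝ) < n+2-a := by linarith
    have h2 : ((n+2)*(n+1+a)/((n+1)*(n+2-a)) : ℝ) ≤ (n+2)*(n+5/4)/((n+1)*(n+7/4)) := by
      have e1 : (n+1+a : ℝ) ≤ n+5/4 := by linarith
      have e2 : (n+7/4 : ℝ) ≤ n+2-a := by linarith
      gcongr
    have h3 : ((n+2)*(n+1+a)/((n+1)*(n+2-a)) : ℝ)^2 ≤ ((n+2)*(n+5/4)/((n+1)*(n+7/4)))^2 := by
      gcongr
    have h4 : (2*n+1) * ((n+2)*(n+5/4)/((n+1)*(n+7/4)) : ℝ)^2 ≤ 2*n+3 := by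
      rw [div_pow, mul_div_assoc', div_le_iff₀ (by positivity)]
      have : (0:ℝ) ≤ n^2 := by positivity
      have : (0:ℝ) ≤ n^3 := by positivity
      have : (0:ℝ) ≤ n^4 := by positivity
      nlinarith
    calc _ ≤ (2*n+1) * ((n+2)*(n+5/4)/((n+1)*(n+7/4)) : ℝ)^2 := by gcongr
      _ ≤ _ := h4
      _ = _ := by push_cast; ring

lemma W_eq (α : ℝ) (hα1 : 1 < α) (hα2 : α ≤ 5/4) (n : ℕ) :
    Wweight 1 α (n+1) = 2*(α-1)*(1-2*(α-1))/((n+2-(α-1))*(n+(α-1))) := by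
  have hn : (0:ℝ) ≤ n := n.cast_nonneg
  unfold Wweight
  have g1 : Real.Gamma (3/2 - α + 1) = (3/2-α) * Real.Gamma (3/2-α) :=
    Real.Gamma_add_one (by linarith)
  have g2 : Real.Gamma α = (α-1) * Real.Gamma (α-1) := by
    rw [← Real.Gamma_add_one (by linarith)]; ring_nf
  have g3 : Real.Gamma (((n+1:ℕ):ℝ) - α + 1 + 2) = (n+3-α) * Real.Gamma (n+3-α) := by
    rw [← Real.Gamma_add_one (by linarith)]; push_cast; ring_nf
  have g4 : Real.Gamma (((n+1:ℕ):ℝ) + α - 1) = (n+α-1) * Real.Gamma (n+α-1) := by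
    rw [← Real.Gamma_add_one (by linarith)]; push_cast; ring_nf
  have g5 : ((n+1:ℕ):ℝ) + α - 1 - 1 = n+α-1 := by push_cast; ring
  have g6 : ((n+1:ℕ):ℝ) - α + 2 = n+3-α := by push_cast; ring
  rw [g1, g3, g4, g5, g6, g2, Real.rpow_one]
  have p1 := (Real.Gamma_pos_of_pos (show 0 < 3/2-α by linarith)).ne'
  have p2 := (Real.Gamma_pos_of_pos (show 0 < α-1 by linarith)).ne'
  have p3 := (Real.Gamma_pos_of_pos (show 0 < n+3-α by linarith)).ne'
  have p4 := (Real.Gamma_pos_of_pos (show 0 < n+α-1 by linarith)).ne'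
  have q1 : (n+3-α) ≠ 0 := by linarith
  have q2 : (n+α-1) ≠ 0 := by linarith
  have e1 : ((n:ℝ)+2-(α-1)) = n+3-α := by ring
  have e2 : ((n:ℝ)+(α-1)) = n+α-1 := by ring
  rw [e1, e2]
  generalize Real.Gamma (3/2-α) = A at *
  generalize Real.Gamma (α-1) = B at *
  generalize Real.Gamma (n+3-α) = C at *
  generalize Real.Gamma (n+α-1) = D at *
  field_simp
  ring

lemma uG_eq (α : ℝ) (hα1 : 1 < α) (hα2 : α ≤ 5/4) (n : ℕ) :
    Wweight 1 α (n+1) * uG (α-1) (n+1) =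
      2 * uG (α-1) (n+1) - uG (α-1) n - uG (α-1) (n+2) := by
  rw [W_eq α hα1 hα2]
  obtain ⟨a, ha⟩ : ∃ a, a = α - 1 := ⟨_, rfl⟩
  rw [← ha]
  have h0 : 0 < a := by linarith
  have h1 : a ≤ 1/4 := by linarith
  cases n with
  | zero =>
    have : (2 - a) ≠ 0 := by linarith
    simp [uG]
    field_simp
    ring
  | succ n =>
    have hn : (0:ℝ) ≤ n := n.cast_nonneg
    have q1 : (n + 2 - a) ≠ 0 := by linarith
    have q2 : (n + 3 - a) ≠ 0 := by linarith
    have q3 : (n + 1 + a) ≠ 0 := by linarith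
    have e1 : (((n+1:ℕ):ℝ) + 2 - a) = n+3-a := by push_cast; ring
    have e2 : (((n+1:ℕ):ℝ) + 1 + a) = n+2+a := by push_cast; ring
    have f1 : uG a (n+1+2) = uG a (n+1+1) * ((((n+1:ℕ):ℝ)+2)*(((n+1:ℕ):ℝ)+1+a)/((((n+1:ℕ):ℝ)+1)*(((n+1:ℕ):ℝ)+2-a))) := by
      rw [uG]
    have f2 : uG a (n+1+1) = uG a (n+1) * ((n+2)*(n+1+a)/((n+1)*(n+2-a))) := by
      rw [uG]
    rw [f1, f2, e1, e2]
    push_cast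
    field_simp
    ring

lemma ground (α : ℝ) (hα1 : 1 < α) (hα2 : α ≤ 5/4) (g : ℕ → ℝ) (N : ℕ) :
    ∑ n ∈ Finset.range (N+1), (uG (α-1) (n+1) * g (n+1) - uG (α-1) n * g n)^2 =
    ∑ n ∈ Finset.range (N+1), uG (α-1) n * uG (α-1) (n+1) * (g (n+1) - g n)^2 +
    ∑ n ∈ Finset.range (N+1), Wweight 1 α n * (uG (α-1) n * g n)^2 +
    uG (α-1) (N+1) * (uG (α-1) (N+1) - uG (α-1) N) * g (N+1)^2 := by
  induction N with
  | zero => simp [uG]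
  | succ N ih =>
    rw [Finset.sum_range_succ, ih, Finset.sum_range_succ _ (N+1), Finset.sum_range_succ _ (N+1)]
    have := uG_eq α hα1 hα2 N
    linear_combination (-uG (α-1) (N+1) * g (N+1)^2) * this

lemma ground_tsum (α : ℝ) (hα1 : 1 < α) (hα2 : α ≤ 5/4) (g : ℕ → ℝ) (N : ℕ)
    (hg : ∀ n, N < n → g n = 0) :
    QDir (fun n => uG (α-1) n * g n) =
    ∑ n ∈ Finset.range (N+1), uG (α-1) n * uG (α-1) (n+1) * (g (n+1) - g n)^2 +
    ∑' n : ℕ, Wweight 1 α n * (uG (α-1) n * g n)^2 := by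
  unfold QDir
  rw [tsum_eq_sum (s := Finset.range (N+1)), tsum_eq_sum (s := Finset.range (N+1)),
    ground α hα1 hα2, hg (N+1) (by omega)]
  · ring
  · intro n hn
    simp at hn
    simp [hg n (by omega)]
  · intro n hn
    simp at hn
    simp [hg n (by omega), hg (n+1) (by omega)]

lemma energy (α : ℝ) (hα1 : 1 < α) (hα2 : α ≤ 5/4) (m : ℕ) (hm : 1 ≤ m) (ε : ℝ) (hε : 0 < ε) :
    ∃ g : ℕ → ℝ, ∃ N : ℕ, g m = 1 ∧ (∀ n, N < n → g n = 0) ∧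
    ∑ n ∈ Finset.range (N+1), uG (α-1) n * uG (α-1) (n+1) * (g (n+1) - g n)^2 < ε := by
  have h0 : 0 < α-1 := by linarith
  have h1 : α-1 ≤ 1/4 := by linarith
  have hu := uG_nonneg (α-1) h0 h1
  have hup := uG_pos (α-1) h0 h1
  have hus := uG_sq (α-1) h0 h1
  generalize uG (α-1) = u at *
  set r : ℕ → ℝ := fun n => if m ≤ n then 1/(u n * u (n+1)) else 0 with hr
  have hr0 : ∀ n, 0 ≤ r n := by
    intro n; simp only [hr]; split_ifs
    · have := hu n; have := hu (n+1); positivity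
    · exact le_rfl
  have hrl : ∀ n, m ≤ n → 1/2 * (1/(n:ℝ)) ≤ r n := by
    intro n hn
    obtain ⟨k, rfl⟩ : ∃ k, n = k+1 := ⟨n-1, by omega⟩
    simp only [hr, if_pos hn]
    have a1 := hup k
    have a2 := hup (k+1)
    have a3 := hus k
    have a4 := hus (k+1)
    have : u (k+1) * u (k+1+1) ≤ 2 * (k+1:ℕ) := by
      push_cast at *
      nlinarith [sq_nonneg (u (k+1) - u (k+1+1))]
    rw [one_div_mul_one_div]
    exact one_div_le_one_div_of_le (by positivity) this
  set S : ℕ → ℝ := fun n => ∑ j ∈ Finset.range n, r j with hS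
  have hSt : Tendsto S atTop atTop := by
    apply (not_summable_iff_tendsto_nat_atTop_of_nonneg hr0).1
    intro hs
    apply Real.not_summable_one_div_natCast
    have h2 := (summable_nat_add_iff m).2 hs
    apply (summable_nat_add_iff m).1
    have h3 : Summable (fun n => 2 * r (n+m)) := h2.mul_left 2
    refine Summable.of_nonneg_of_le (fun n => by positivity) (fun n => ?_) h3
    have := hrl (n+m) (by omega)
    linarith
  have hmono : Monotone S := monotone_nat_of_le_succ (fun n => by
    simp only [hS, Finset.sum_range_succ]; linarith [hr0 n])
  obtain ⟨N, hN⟩ := (hSt.eventually_gt_atTop (1/ε)).exists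
  have hSN : 0 < S N := lt_trans (by positivity) hN
  have hSm : S m = 0 := by
    apply Finset.sum_eq_zero
    intro j hj
    simp at hj
    simp [hr, hj]
  refine ⟨fun n => if n < N then 1 - S n / S N else 0, N, ?_, ?_, ?_⟩
  · have : m < N := by
      by_contra h
      linarith [hmono (not_lt.1 h)]
    simp [this, hSm]
  · intro n hn
    simp [not_lt.2 hn.le]
  · have hg : ∀ n, n ≤ N → (if n < N then 1 - S n / S N else 0) = 1 - S n / S N := by
      intro n hn
      split_ifs with h
      · rfl
      · rw [show n = N by omega, div_self hSN.ne', sub_self]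
    rw [Finset.sum_range_succ]
    have : ∑ n ∈ Finset.range N, u n * u (n+1) * ((if n+1 < N then 1 - S (n+1) / S N else 0) -
        (if n < N then 1 - S n / S N else 0))^2 = ∑ n ∈ Finset.range N, r n / (S N)^2 := by
      apply Finset.sum_congr rfl
      intro n hn
      simp at hn
      rw [hg n hn.le, hg (n+1) hn]
      have e : S (n+1) = S n + r n := Finset.sum_range_succ _ _
      have e2 : u n * u (n+1) * (r n)^2 = r n := by
        simp only [hr]
        split_ifs with h
        · obtain ⟨k, rfl⟩ : ∃ k, n = k+1 := ⟨n-1, by omega⟩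
          have a1 := hup k
          have a2 := hup (k+1)
          field_simp
        · simp
      rw [e]
      calc _ = u n * u (n+1) * (r n)^2 / S N ^ 2 := by field_simp; ring
        _ = _ := by rw [e2]
    simp only [this]
    rw [← Finset.sum_div]
    simp
    change S N / S N^2 < ε
    rw [div_lt_iff₀ (by positivity)]
    rw [div_lt_iff₀ hε] at hN
    nlinarith

/-- Criticality of `-Δ_ℕ - W_{α,1}` for `α ∈ (1, 5/4]`. -/
theorem stmt_9 (α : ℝ) (hα1 : 1 < α) (hα2 : α ≤ 5/4) :
    (∀ f : ℕ → ℝ, f 0 = 0 → (Function.support f).Finite →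
      (∑' n : ℕ, Wweight 1 α n * (f n) ^ 2) ≤ QDir f) ∧
    (∀ Wt : ℕ → ℝ, (∀ n, 0 ≤ Wt n) → (∃ n, 1 ≤ n ∧ Wt n ≠ 0) →
      ∃ f : ℕ → ℝ, f 0 = 0 ∧ (Function.support f).Finite ∧
        QDir f < ∑' n : ℕ, (Wweight 1 α n + Wt n) * (f n) ^ 2) := by
  have h0 : 0 < α-1 := by linarith
  have h1 : α-1 ≤ 1/4 := by linarith
  constructor
  · intro f hf0 hfs
    obtain ⟨N, hN⟩ := hfs.bddAbove
    have hfz : ∀ n, N < n → f n = 0 := by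
      intro n hn
      by_contra h
      exact absurd (hN (Function.mem_support.2 h)) (not_le.2 hn)
    have hf : f = fun n => uG (α-1) n * (f n / uG (α-1) n) := by
      funext n
      cases n with
      | zero => simp [hf0]
      | succ n => rw [mul_div_cancel₀ _ (uG_pos _ h0 h1 n).ne']
    have key := ground_tsum α hα1 hα2 (fun n => f n / uG (α-1) n) N
      (fun n hn => by simp [hfz n hn])
    have hnn : 0 ≤ ∑ n ∈ Finset.range (N+1), uG (α-1) n * uG (α-1) (n+1) *
        (f (n+1) / uG (α-1) (n+1) - f n / uG (α-1) n)^2 :=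
      Finset.sum_nonneg (fun n _ => mul_nonneg
        (mul_nonneg (uG_nonneg _ h0 h1 n) (uG_nonneg _ h0 h1 (n+1))) (sq_nonneg _))
    have hf' : ∀ n, uG (α-1) n * (f n / uG (α-1) n) = f n := fun n => (congrFun hf n).symm
    simp only [hf'] at key
    rw [key]
    linarith
  · rintro Wt hW ⟨m, hm, hWm⟩
    have hWm' : 0 < Wt m := lt_of_le_of_ne (hW m) (Ne.symm hWm)
    have hum : 0 < uG (α-1) m := by
      obtain ⟨k, rfl⟩ : ∃ k, m = k+1 := ⟨m-1, by omega⟩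
      exact uG_pos _ h0 h1 k
    obtain ⟨g, N, gm, gz, ge⟩ := energy α hα1 hα2 m hm (Wt m * uG (α-1) m^2) (by positivity)
    have hsup : ∀ V : ℕ → ℝ, Summable (fun n => V n * (uG (α-1) n * g n)^2) := by
      intro V
      apply summable_of_ne_finset_zero (s := Finset.range (N+1))
      intro n hn
      simp at hn
      simp [gz n (by omega)]
    refine ⟨fun n => uG (α-1) n * g n, by simp [uG], ?_, ?_⟩
    · apply (Finset.finite_toSet (Finset.range (N+1))).subset
      intro n hn
      by_contra h
      simp at h
      exact hn (by simp [gz n (by omega)])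
    · rw [ground_tsum α hα1 hα2 g N gz]
      simp only [add_mul]
      rw [(hsup _).tsum_add (hsup Wt)]
      have := (hsup Wt).le_tsum m (fun n _ => mul_nonneg (hW n) (sq_nonneg _))
      simp only [gm, mul_one] at this
      linarith
end
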